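/- arXiv:math/0405171 — 5 statements merged into one kernel-verified Lean document; each statement's English description precedes it below -/
import Mathlib

section
/- For every integer k divisible by 4, the function f_k(m) = |S(m,k)|/4 is multiplicative on the positive integers: f_k(1) = 1 and f_k(mn) = f_k(m)·f_k(n) whenever gcd(m,n) = 1. Moreover f_k(m) ≤ r(m)/4 for every m ≥ 1. -/
/-- The set of lattice points `(x, y) ∈ ℤ²` with `x² + y² = n`. -/
noncomputable def latticeCircle (n : ℕ) : Finset (ℤ × ℤ) :=
  (Finset.Icc (-(n : ℤ)) (n : ℤ) ×ˢ Finset.Icc (-(n : ℤ)) (n : ℤ)).filter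
    (fun p => p.1 ^ 2 + p.2 ^ 2 = (n : ℤ))

/-- `r n` is the number of lattice points on the circle of squared radius `n`. -/
noncomputable def latticeR (n : ℕ) : ℕ := (latticeCircle n).card

/-- The angle `θ_u ∈ [0, 2π)` of a lattice point `u`. -/
noncomputable def latticeTheta (u : ℤ × ℤ) : ℝ :=
  if 0 ≤ Complex.arg ((u.1 : ℂ) + (u.2 : ℂ) * Complex.I)
  then Complex.arg ((u.1 : ℂ) + (u.2 : ℂ) * Complex.I)
  else Complex.arg ((u.1 : ℂ) + (u.2 : ℂ) * Complex.I) + 2 * Real.pi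

/-- The exponential sum `S(m, k) = Σ_{u ∈ ℤ², |u|² = m} exp(i k θ_u)`. -/
noncomputable def latticeS (m : ℕ) (k : ℤ) : ℂ :=
  ∑ u ∈ latticeCircle m, Complex.exp ((k : ℂ) * (latticeTheta u : ℂ) * Complex.I)

/-!
Identify `ℤ²` with `ℤ[i]`. For nonzero `u`, `exp (i k θ_u) = (u / |u|) ^ k` is completely
multiplicative in `u`. For coprime positive `m` and `n`, each `z` of norm `m * n` is a product of an
element of norm `m` and one of norm `n`, and this factorization is unique up to moving one of the
four units of `ℤ[i]` across. Hence `S(m, k) * S(n, k) = 4 * S(m * n, k)` for every `k`.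
If `4 ∣ k`, each unit contributes `1` to `S(1, k)`, so that `S(1, k) = 4`.
-/

theorem eq_of_mul_eq_mul_of_isCoprime {a b m n : ℤ} (ha : 0 ≤ a) (hm : 0 ≤ m)
    (h : a * b = m * n) (han : IsCoprime a n) (hmb : IsCoprime m b) : a = m :=
  Int.dvd_antisymm ha hm (han.dvd_of_dvd_mul_right ⟨b, h.symm⟩)
    (hmb.dvd_of_dvd_mul_right ⟨n, h⟩)

section Zsqrtd

variable {d : ℤ} {a b x y : ℤ√d}

theorem dvd_intCast_norm (a : ℤ√d) : a ∣ (a.norm : ℤ√d) :=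
  ⟨star a, Zsqrtd.norm_eq_mul_conj a⟩

theorem isCoprime_of_isCoprime_norm (h : IsCoprime a.norm b.norm) : IsCoprime a b :=
  have hnorm : IsCoprime (a.norm : ℤ√d) (b.norm : ℤ√d) := h.map (Int.castRingHom (ℤ√d))
  (hnorm.of_isCoprime_of_dvd_left (dvd_intCast_norm a)).of_isCoprime_of_dvd_right
    (dvd_intCast_norm b)

theorem isCoprime_norm_of_dvd_natCast {m n : ℕ} (hmn : m.Coprime n) (ha : a ∣ (m : ℤ√d)) :
    IsCoprime a.norm n := by
  have hdvd : a.norm ∣ (m : ℤ) * m :=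
    (map_dvd Zsqrtd.normMonoidHom ha).trans (Zsqrtd.norm_natCast m).dvd
  have hmn' : IsCoprime (m : ℤ) n := hmn.isCoprime
  exact (hmn'.mul_left hmn').of_isCoprime_of_dvd_left hdvd

theorem exists_mul_eq_of_norm_eq_mul [DecompositionMonoid (ℤ√d)] (hd : d ≤ 0) {m n : ℕ}
    (hmn : m.Coprime n) {z : ℤ√d} (hz : z.norm = m * n) :
    ∃ a b : ℤ√d, a.norm = m ∧ b.norm = n ∧ a * b = z := by
  have hdvd : z ∣ (m : ℤ√d) * n := by simpa [hz] using dvd_intCast_norm z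
  obtain ⟨a, b, ha, hb, rfl⟩ := exists_dvd_and_dvd_of_dvd_mul hdvd
  have han : IsCoprime a.norm n := isCoprime_norm_of_dvd_natCast hmn ha
  have hbm : IsCoprime b.norm m := isCoprime_norm_of_dvd_natCast hmn.symm hb
  have hab : a.norm * b.norm = m * n := by rw [← Zsqrtd.norm_mul, hz]
  refine ⟨a, b, ?_, ?_, rfl⟩
  · exact eq_of_mul_eq_mul_of_isCoprime (Zsqrtd.norm_nonneg hd a) m.cast_nonneg hab han hbm.symm
  · exact eq_of_mul_eq_mul_of_isCoprime (Zsqrtd.norm_nonneg hd b) n.cast_nonneg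
      (by rw [mul_comm, hab, mul_comm]) hbm han.symm

theorem mul_star_eq_one_of_norm_eq_one (ha : a.norm = 1) : a * star a = 1 :=
  Unitary.mul_star_self_of_mem (Zsqrtd.norm_eq_one_iff_mem_unitary.1 ha)

theorem exists_norm_eq_one_of_mul_eq_mul [IsDomain (ℤ√d)] (ha : a.norm ≠ 0)
    (hax : a.norm = x.norm) (hay : IsCoprime a y) (h : a * b = x * y) :
    ∃ u : ℤ√d, u.norm = 1 ∧ a * u = x ∧ star u * b = y := by
  obtain ⟨u, rfl⟩ : a ∣ x := hay.dvd_of_dvd_mul_right ⟨b, h.symm⟩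
  have hu : u.norm = 1 := by simpa [Zsqrtd.norm_mul, ha] using hax
  have ha' : a ≠ 0 := by rintro rfl; exact ha Zsqrtd.norm_zero
  have hb : b = u * y := mul_left_cancel₀ ha' (by rw [h, mul_assoc])
  refine ⟨u, hu, rfl, ?_⟩
  rw [hb, ← mul_assoc, mul_comm (star u), mul_star_eq_one_of_norm_eq_one hu, one_mul]

end Zsqrtd

section GaussianSphere

/-- The identification of `ℤ²` with the Gaussian integers, `(x, y) ↦ x + iy`. -/
def latticeEquivGaussianInt : ℤ × ℤ ≃ GaussianInt where
  toFun u := ⟨u.1, u.2⟩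
  invFun z := (z.re, z.im)

theorem mem_latticeCircle {n : ℕ} {u : ℤ × ℤ} :
    u ∈ latticeCircle n ↔ u.1 ^ 2 + u.2 ^ 2 = n := by
  simp only [latticeCircle, Finset.mem_filter, Finset.mem_product, Finset.mem_Icc, ← abs_le,
    and_iff_right_iff_imp]
  intro h
  have hle (x : ℤ) : |x| ≤ x ^ 2 := sq_abs x ▸ Int.le_self_sq |x|
  constructor
  · linarith [hle u.1, sq_nonneg u.2]
  · linarith [hle u.2, sq_nonneg u.1]

/-- The finite set of Gaussian integers of norm `m`: `latticeCircle m` carried over to `ℤ[i]`,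
where points can be multiplied. -/
noncomputable def gaussianSphere (m : ℕ) : Finset GaussianInt :=
  (latticeCircle m).map latticeEquivGaussianInt.toEmbedding

theorem mem_gaussianSphere {m : ℕ} {z : GaussianInt} : z ∈ gaussianSphere m ↔ z.norm = m := by
  rw [gaussianSphere, Finset.mem_map_equiv, mem_latticeCircle, Zsqrtd.norm_def]
  simp only [latticeEquivGaussianInt, Equiv.coe_fn_symm_mk]
  ring_nf

theorem mem_gaussianSphere_one {z : GaussianInt} : z ∈ gaussianSphere 1 ↔ z.norm = 1 := by
  rw [mem_gaussianSphere, Nat.cast_one]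

theorem card_gaussianSphere_one : (gaussianSphere 1).card = 4 := by
  rw [gaussianSphere, Finset.card_map, latticeCircle]
  decide

theorem pow_four_eq_one_of_mem_gaussianSphere_one {u : GaussianInt} (hu : u ∈ gaussianSphere 1) :
    u ^ 4 = 1 := by
  revert u
  rw [gaussianSphere, Finset.forall_mem_map, latticeCircle]
  decide

theorem mul_mem_gaussianSphere {m n : ℕ} {a b : GaussianInt} (ha : a ∈ gaussianSphere m)
    (hb : b ∈ gaussianSphere n) : a * b ∈ gaussianSphere (m * n) := by
  rw [mem_gaussianSphere] at ha hb ⊢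
  rw [Zsqrtd.norm_mul, ha, hb, Nat.cast_mul]

theorem star_mem_gaussianSphere {m : ℕ} {a : GaussianInt} (ha : a ∈ gaussianSphere m) :
    star a ∈ gaussianSphere m := by
  rwa [mem_gaussianSphere, Zsqrtd.norm_conj, ← mem_gaussianSphere]

theorem card_factorizations_eq_four {m n : ℕ} (hm : m ≠ 0) (hmn : m.Coprime n) {z : GaussianInt}
    (hz : z ∈ gaussianSphere (m * n)) :
    {p ∈ gaussianSphere m ×ˢ gaussianSphere n | p.1 * p.2 = z}.card = 4 := by
  rw [mem_gaussianSphere, Nat.cast_mul] at hz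
  obtain ⟨a, b, ha, hb, rfl⟩ := exists_mul_eq_of_norm_eq_mul (by norm_num) hmn hz
  have ha0 : a.norm ≠ 0 := by rw [ha]; exact_mod_cast hm
  rw [← card_gaussianSphere_one]
  symm
  refine Finset.card_bij (fun u _ ↦ (a * u, star u * b)) (fun u hu ↦ ?maps) ?inj ?surj
  case maps =>
    rw [Finset.mem_filter, Finset.mem_product]
    refine ⟨⟨?_, ?_⟩, ?_⟩
    · simpa only [mul_one] using mul_mem_gaussianSphere (mem_gaussianSphere.2 ha) hu
    · simpa only [one_mul] using
        mul_mem_gaussianSphere (star_mem_gaussianSphere hu) (mem_gaussianSphere.2 hb)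
    · linear_combination
        a * b * mul_star_eq_one_of_norm_eq_one (mem_gaussianSphere_one.1 hu)
  case inj =>
    intro u _ v _ huv
    exact mul_left_cancel₀ (GaussianInt.norm_eq_zero.not.1 ha0) (Prod.ext_iff.1 huv).1
  case surj =>
    rintro ⟨x, y⟩ hxy
    simp only [Finset.mem_filter, Finset.mem_product, mem_gaussianSphere] at hxy
    obtain ⟨⟨hx, hy⟩, hxy⟩ := hxy
    have hay : IsCoprime a y :=
      isCoprime_of_isCoprime_norm (by rw [ha, hy]; exact hmn.isCoprime)
    obtain ⟨u, hu, rfl, rfl⟩ :=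
      exists_norm_eq_one_of_mul_eq_mul ha0 (ha.trans hx.symm) hay hxy.symm
    exact ⟨u, mem_gaussianSphere_one.2 hu, rfl⟩

theorem sum_gaussianSphere_mul_sum_gaussianSphere {R : Type*} [CommSemiring R]
    (χ : GaussianInt →ₙ* R) {m n : ℕ} (hm : m ≠ 0) (hmn : m.Coprime n) :
    (∑ a ∈ gaussianSphere m, χ a) * ∑ b ∈ gaussianSphere n, χ b =
      4 * ∑ z ∈ gaussianSphere (m * n), χ z := by
  have hmaps : ∀ p ∈ gaussianSphere m ×ˢ gaussianSphere n,
      p.1 * p.2 ∈ gaussianSphere (m * n) := fun p hp ↦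
    mul_mem_gaussianSphere (Finset.mem_product.1 hp).1 (Finset.mem_product.1 hp).2
  calc (∑ a ∈ gaussianSphere m, χ a) * ∑ b ∈ gaussianSphere n, χ b
      = ∑ p ∈ gaussianSphere m ×ˢ gaussianSphere n, χ (p.1 * p.2) := by
        simp only [Finset.sum_mul_sum, Finset.sum_product, map_mul]
    _ = ∑ z ∈ gaussianSphere (m * n),
          ∑ p ∈ gaussianSphere m ×ˢ gaussianSphere n with p.1 * p.2 = z, χ z :=
        (Finset.sum_fiberwise_of_maps_to' hmaps χ).symm
    _ = ∑ z ∈ gaussianSphere (m * n), 4 * χ z := Finset.sum_congr rfl fun z hz ↦ by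
        rw [Finset.sum_const, card_factorizations_eq_four hm hmn hz, nsmul_eq_mul, Nat.cast_ofNat]
    _ = 4 * ∑ z ∈ gaussianSphere (m * n), χ z := (Finset.mul_sum ..).symm

end GaussianSphere

section AngularCharacter

/-- The angular Hecke character `z ↦ (z / |z|) ^ k` of the Gaussian integers, by which the terms of
`latticeS m k` become multiplicative. Its value at `0` is `0 ^ k`. -/
noncomputable def angularChar (k : ℤ) : GaussianInt →* ℂ where
  toFun z := (z.toComplex / ‖z.toComplex‖) ^ k
  map_one' := by simp
  map_mul' z w := by
    rw [map_mul, norm_mul, Complex.ofReal_mul, mul_div_mul_comm, mul_zpow]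

theorem angularChar_mul_natCast (k : ℤ) (n : ℕ) (z : GaussianInt) :
    angularChar (k * n) z = angularChar k (z ^ n) := by
  rw [map_pow]
  exact (zpow_mul _ k n).trans (zpow_natCast _ n)

theorem angularChar_eq_one {k : ℤ} (hk : 4 ∣ k) {u : GaussianInt} (hu : u ∈ gaussianSphere 1) :
    angularChar k u = 1 := by
  obtain ⟨j, rfl⟩ := hk
  rw [mul_comm]
  exact (angularChar_mul_natCast j 4 u).trans
    (by rw [pow_four_eq_one_of_mem_gaussianSphere_one hu, map_one])

theorem norm_mul_exp_latticeTheta_mul_I (u : ℤ × ℤ) :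
    ‖(latticeEquivGaussianInt u).toComplex‖ * Complex.exp (latticeTheta u * Complex.I) =
      (latticeEquivGaussianInt u).toComplex := by
  have hexp : Complex.exp (latticeTheta u * Complex.I) =
      Complex.exp ((latticeEquivGaussianInt u).toComplex.arg * Complex.I) := by
    rw [latticeTheta, ← GaussianInt.toComplex_def']
    split_ifs
    · rfl
    · push_cast
      exact Complex.exp_mul_I_periodic _
  rw [hexp, Complex.norm_mul_exp_arg_mul_I]

theorem exp_mul_latticeTheta_mul_I (k : ℤ) {u : ℤ × ℤ} (hu : latticeEquivGaussianInt u ≠ 0) :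
    Complex.exp (k * latticeTheta u * Complex.I) = angularChar k (latticeEquivGaussianInt u) := by
  have hnorm : (‖(latticeEquivGaussianInt u).toComplex‖ : ℂ) ≠ 0 := by simpa using hu
  rw [mul_assoc, Complex.exp_int_mul,
    eq_div_of_mul_eq hnorm ((mul_comm _ _).trans (norm_mul_exp_latticeTheta_mul_I u))]
  rfl

theorem latticeS_eq_sum_angularChar {m : ℕ} (hm : m ≠ 0) (k : ℤ) :
    latticeS m k = ∑ z ∈ gaussianSphere m, angularChar k z := by
  rw [latticeS, gaussianSphere, Finset.sum_map]
  refine Finset.sum_congr rfl fun u hu ↦ exp_mul_latticeTheta_mul_I k fun hu0 ↦ hm ?_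
  have hmem : latticeEquivGaussianInt u ∈ gaussianSphere m := Finset.mem_map_of_mem _ hu
  rw [mem_gaussianSphere, hu0, Zsqrtd.norm_zero] at hmem
  exact_mod_cast hmem.symm

theorem latticeS_one {k : ℤ} (hk : 4 ∣ k) : latticeS 1 k = 4 := by
  rw [latticeS_eq_sum_angularChar one_ne_zero,
    Finset.sum_congr rfl fun u hu ↦ angularChar_eq_one hk hu, Finset.sum_const,
    card_gaussianSphere_one, nsmul_one, Nat.cast_ofNat]

theorem latticeS_mul_latticeS {m n : ℕ} (hm : m ≠ 0) (hn : n ≠ 0) (hmn : m.Coprime n) (k : ℤ) :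
    latticeS m k * latticeS n k = 4 * latticeS (m * n) k := by
  rw [latticeS_eq_sum_angularChar hm, latticeS_eq_sum_angularChar hn,
    latticeS_eq_sum_angularChar (mul_ne_zero hm hn)]
  exact sum_gaussianSphere_mul_sum_gaussianSphere (angularChar k : GaussianInt →ₙ* ℂ) hm hmn

theorem norm_latticeS_le (m : ℕ) (k : ℤ) : ‖latticeS m k‖ ≤ latticeR m := by
  have hterm (u : ℤ × ℤ) : ‖Complex.exp (k * latticeTheta u * Complex.I)‖ = 1 := by
    exact_mod_cast Complex.norm_exp_ofReal_mul_I (k * latticeTheta u)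
  calc ‖latticeS m k‖ ≤ ∑ u ∈ latticeCircle m, ‖Complex.exp (k * latticeTheta u * Complex.I)‖ :=
        norm_sum_le _ _
    _ = latticeR m := by
        simp only [hterm, Finset.sum_const, nsmul_eq_mul, mul_one, latticeR]

end AngularCharacter

/-- For `4 ∣ k`, the function `f_k(m) = |S(m,k)|/4` is multiplicative on the positive
integers, and satisfies `f_k(m) ≤ r(m)/4`. -/
theorem absS_div_four_multiplicative (k : ℤ) (hk : 4 ∣ k) :
    (‖latticeS 1 k‖ / 4 = 1) ∧
    (∀ m n : ℕ, 0 < m → 0 < n → Nat.Coprime m n →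
      ‖latticeS (m * n) k‖ / 4 =
        (‖latticeS m k‖ / 4) * (‖latticeS n k‖ / 4)) ∧
    (∀ m : ℕ, 1 ≤ m → ‖latticeS m k‖ / 4 ≤ (latticeR m : ℝ) / 4) := by
  refine ⟨?_, fun m n hm hn hmn ↦ ?_, fun m _ ↦ ?_⟩
  · rw [latticeS_one hk, RCLike.norm_ofNat, div_self four_ne_zero]
  · have hmul := congrArg norm (latticeS_mul_latticeS hm.ne' hn.ne' hmn k)
    rw [norm_mul, norm_mul, RCLike.norm_ofNat] at hmul
    linarith
  · gcongr
    exact norm_latticeS_le m k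
end

section
/- (Weak form of the Halberstam–Richert inequality.) Let f be a nonnegative multiplicative function such that Σ_{n ≤ x} f(n) = O(x) and such that there is a constant B with f(p^k) ≤ B·k for all primes p and all k ≥ 1. Then there exist constants C > 0 and X₀ such that for all X ≥ X₀, (1/X) · Σ_{m ≤ X} f(m) ≤ C · exp( Σ_{p ≤ X, p prime} (f(p) − 1)/p ) + C/ log X. -/
/-!
Summing `log n = ∑_{q ∥ n} log q` against a multiplicative `f ≥ 0` gives
`∑_{n ≤ N} f(n) log n ≤ ∑_{m ≤ N} f(m) ∑_{q ≤ N/m} f(q) log q`, where `q` runs over prime powers,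
and a Chebyshev-type bound for the inner sum makes this `O(N ∑_{m ≤ N} f(m)/m)`. Since
`log (N/n) ≤ N/n`, the weight `log n` may be replaced by `log N`. Expanding `∏_{q ≤ N} (1 + f(q)/q)`
shows `∑_{m ≤ N} f(m)/m ≤ exp (∑_{p ≤ N} f(p)/p + O(1))`, and Mertens' estimate
`∑_{p ≤ N} 1/p ≤ log log N + O(1)` turns the factor `1 / log N` into the `-1` in `(f(p) - 1)/p`.
-/

section Mertens

open Finset Real
open scoped ArithmeticFunction.vonMangoldt ArithmeticFunction.zeta

lemma sum_primesLE_log_mul_div_le (N : ℕ) :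
    ∑ p ∈ N.primesLE, log p * ↑(N / p) ≤ N * log N := by
  calc ∑ p ∈ N.primesLE, log p * ↑(N / p)
      = ∑ p ∈ N.primesLE, Λ p * ↑(N / p) := by
        refine sum_congr rfl fun p hp ↦ ?_
        rw [ArithmeticFunction.vonMangoldt_apply_prime (Nat.prime_of_mem_primesLE hp)]
    _ ≤ ∑ n ∈ Ioc 0 N, Λ n * ↑(N / n) := by
        rw [Nat.primesLE_eq_filter_Ioc_zero]
        exact sum_le_sum_of_subset_of_nonneg (filter_subset _ _) fun _ _ _ ↦
          mul_nonneg ArithmeticFunction.vonMangoldt_nonneg (Nat.cast_nonneg _)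
    _ = ∑ n ∈ Ioc 0 N, log n := by
        rw [← ArithmeticFunction.sum_Ioc_mul_zeta_eq_sum, ArithmeticFunction.vonMangoldt_mul_zeta]
        rfl
    _ ≤ N * log N := by
        have hle : ∀ n ∈ Ioc 0 N, log n ≤ log N := fun n hn ↦
          log_le_log (mod_cast (mem_Ioc.1 hn).1) (mod_cast (mem_Ioc.1 hn).2)
        simpa using sum_le_card_nsmul _ _ _ hle

theorem sum_primesLE_log_div_le {N : ℕ} (hN : N ≠ 0) :
    ∑ p ∈ N.primesLE, log p / p ≤ log N + log 4 := by
  have hN' : (0 : ℝ) < N := mod_cast Nat.pos_of_ne_zero hN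
  have htheta : ∑ p ∈ N.primesLE, log p ≤ log 4 * N := by
    rw [← Chebyshev.theta_eq_sum_primesLE_log]
    exact Chebyshev.theta_le_log4_mul_x hN'.le
  refine le_of_mul_le_mul_left ?_ hN'
  calc N * ∑ p ∈ N.primesLE, log p / p
      = ∑ p ∈ N.primesLE, log p * (N / p) := by
        rw [mul_sum]
        exact sum_congr rfl fun p _ ↦ by ring
    _ ≤ ∑ p ∈ N.primesLE, log p * (↑(N / p) + 1) := by
        gcongr with p
        rw [← Nat.floor_div_eq_div (K := ℝ)]
        exact (Nat.lt_floor_add_one _).le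
    _ = ∑ p ∈ N.primesLE, log p * ↑(N / p) + ∑ p ∈ N.primesLE, log p := by
        simp only [mul_add, mul_one, sum_add_distrib]
    _ ≤ N * log N + log 4 * N := add_le_add (sum_primesLE_log_mul_div_le N) htheta
    _ = N * (log N + log 4) := by ring

-- Partial summation against `1 / log`, whose differences are controlled by those of `log log`.
lemma sum_le_sum_mul_log_div_log_add {a : ℕ → ℝ} {c : ℝ}
    (h : ∀ n, 2 ≤ n → ∑ k ∈ Icc 2 n, a k * log k ≤ log n + c) {n : ℕ} (hn : 2 ≤ n) :
    ∑ k ∈ Icc 2 n, a k ≤ (∑ k ∈ Icc 2 n, a k * log k) / log n +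
      (log (log n) - log (log 2)) + c * (1 / log 2 - 1 / log n) := by
  induction n, hn using Nat.le_induction with
  | base => simp [mul_div_cancel_right₀ _ (log_pos one_lt_two).ne']
  | succ n hn ih =>
    have hlog : 0 < log n := log_pos (mod_cast hn)
    have hlog' : 0 < log ↑(n + 1) := log_pos (mod_cast Nat.lt_add_right 1 hn)
    have hmono : log n ≤ log ↑(n + 1) := log_le_log (by positivity) (mod_cast n.le_succ)
    have hinv : 0 ≤ 1 / log n - 1 / log ↑(n + 1) :=
      sub_nonneg.2 (one_div_le_one_div_of_le hlog hmono)
    have hloglog : 1 - log n / log ↑(n + 1) ≤ log (log ↑(n + 1)) - log (log n) := by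
      rw [← log_div hlog'.ne' hlog.ne', ← inv_div]
      exact one_sub_inv_le_log_of_pos (div_pos hlog' hlog)
    have hstep : (∑ k ∈ Icc 2 n, a k * log k) * (1 / log n - 1 / log ↑(n + 1)) ≤
        1 - log n / log ↑(n + 1) + c * (1 / log n - 1 / log ↑(n + 1)) := by
      refine (mul_le_mul_of_nonneg_right (h n hn) hinv).trans_eq ?_
      field_simp
    have hlast : a (n + 1) * log ↑(n + 1) / log ↑(n + 1) = a (n + 1) :=
      mul_div_cancel_right₀ _ hlog'.ne'
    rw [sum_Icc_succ_top (by lia), sum_Icc_succ_top (by lia), add_div, hlast]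
    linear_combination ih + hstep + hloglog

lemma sum_le_log_log_add {a : ℕ → ℝ} {c : ℝ}
    (h : ∀ n, 2 ≤ n → ∑ k ∈ Icc 2 n, a k * log k ≤ log n + c) {n : ℕ} (hn : 2 ≤ n) :
    ∑ k ∈ Icc 2 n, a k ≤ log (log n) + (1 - log (log 2) + c / log 2) := by
  have hlog : 0 < log n := log_pos (mod_cast hn)
  have hratio : (∑ k ∈ Icc 2 n, a k * log k) / log n ≤ 1 + c / log n := by
    rw [div_le_iff₀ hlog, add_mul, one_mul, div_mul_cancel₀ _ hlog.ne']
    exact h n hn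
  linear_combination sum_le_sum_mul_log_div_log_add h hn + hratio

theorem exists_sum_primesLE_one_div_le :
    ∃ c : ℝ, ∀ N : ℕ, 2 ≤ N → ∑ p ∈ N.primesLE, (1 : ℝ) / p ≤ log (log N) + c := by
  let a : ℕ → ℝ := fun n ↦ if n.Prime then 1 / (n : ℝ) else 0
  refine ⟨1 - log (log 2) + log 4 / log 2, fun N hN ↦ ?_⟩
  rw [Nat.primesLE_eq_filter_Icc_two, sum_filter]
  refine sum_le_log_log_add (a := a) (fun n hn ↦ ?_) hN
  calc ∑ k ∈ Icc 2 n, a k * log k = ∑ p ∈ n.primesLE, log p / p := by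
        simp only [a, Nat.primesLE_eq_filter_Icc_two, sum_filter, ite_mul, zero_mul,
          one_div_mul_eq_div]
    _ ≤ log n + log 4 := sum_primesLE_log_div_le (by lia)

end Mertens

section ExactPrimePowers

open Finset

lemma factorization_ne_zero_of_mem_primeFactors {n p : ℕ} (hp : p ∈ n.primeFactors) :
    n.factorization p ≠ 0 :=
  Finsupp.mem_support_iff.1 (n.support_factorization ▸ hp)

/-- The prime powers `q ∥ n`, that is, the factors `p ^ k` in the prime factorization of `n`:
the arguments at which a multiplicative function determines its value at `n`. -/
def exactPrimePowers (n : ℕ) : Finset ℕ :=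
  n.primeFactors.image fun p ↦ p ^ n.factorization p

namespace exactPrimePowers

variable {n q : ℕ}

lemma isPrimePow_of_mem (hq : q ∈ exactPrimePowers n) : IsPrimePow q := by
  obtain ⟨p, hp, rfl⟩ := mem_image.1 hq
  exact (Nat.prime_of_mem_primeFactors hp).isPrimePow.pow
    (factorization_ne_zero_of_mem_primeFactors hp)

lemma dvd_of_mem (hq : q ∈ exactPrimePowers n) : q ∣ n := by
  obtain ⟨p, -, rfl⟩ := mem_image.1 hq
  exact Nat.ordProj_dvd n p

lemma coprime_div_of_mem (hq : q ∈ exactPrimePowers n) : (n / q).Coprime q := by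
  obtain ⟨p, hp, rfl⟩ := mem_image.1 hq
  exact ((Nat.coprime_ordCompl (Nat.prime_of_mem_primeFactors hp)
    (Nat.mem_primeFactors.1 hp).2.2).pow_left _).symm

lemma prod_eq_factorization_prod {M : Type*} [CommMonoid M] (n : ℕ) (g : ℕ → M) :
    ∏ q ∈ exactPrimePowers n, g q = n.factorization.prod fun p k ↦ g (p ^ k) := by
  refine prod_image fun p hp p' hp' h ↦ ?_
  exact ((Nat.prime_of_mem_primeFactors hp).pow_inj' (Nat.prime_of_mem_primeFactors hp')
    (factorization_ne_zero_of_mem_primeFactors hp)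
    (factorization_ne_zero_of_mem_primeFactors hp') h).1

lemma prod_eq_of_multiplicative {M : Type*} [CommMonoid M] {f : ℕ → M} (h1 : f 1 = 1)
    (hmul : ∀ m n : ℕ, m.Coprime n → f (m * n) = f m * f n) (hn : n ≠ 0) :
    ∏ q ∈ exactPrimePowers n, f q = f n := by
  rw [prod_eq_factorization_prod, Nat.multiplicative_factorization f hmul h1 hn]

lemma prod_eq_self (hn : n ≠ 0) : ∏ q ∈ exactPrimePowers n, q = n :=
  prod_eq_of_multiplicative (f := id) rfl (fun _ _ _ ↦ rfl) hn

lemma sum_log_eq (hn : n ≠ 0) : ∑ q ∈ exactPrimePowers n, Real.log q = Real.log n := by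
  rw [← Real.log_prod fun q hq ↦ Nat.cast_ne_zero.2 (isPrimePow_of_mem hq).ne_zero,
    ← Nat.cast_prod, prod_eq_self hn]

lemma injOn : Set.InjOn exactPrimePowers {n | n ≠ 0} := fun m hm n hn h ↦ by
  rw [← prod_eq_self hm, h, prod_eq_self hn]

end exactPrimePowers

end ExactPrimePowers

section SumMultiplicative

open Finset Real

-- Expanding `∏ (1 + f q)` over the prime powers `q ≤ N` gives every `f n` with `n ≤ N`,
-- since `n` is determined by its set of exact prime power divisors.
theorem sum_le_exp_sum_isPrimePow {f : ℕ → ℝ} (hnn : ∀ n, 0 ≤ f n) (h1 : f 1 = 1)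
    (hmul : ∀ m n : ℕ, m.Coprime n → f (m * n) = f m * f n) (N : ℕ) :
    ∑ n ∈ Ioc 0 N, f n ≤ exp (∑ q ∈ Ioc 0 N with IsPrimePow q, f q) := by
  set Q := {q ∈ Ioc 0 N | IsPrimePow q}
  have hinj : Set.InjOn exactPrimePowers (Ioc 0 N) :=
    exactPrimePowers.injOn.mono fun n hn ↦ (mem_Ioc.1 hn).1.ne'
  have hsub : (Ioc 0 N).image exactPrimePowers ⊆ Q.powerset := by
    simp only [image_subset_iff, mem_Ioc, mem_powerset]
    intro n ⟨hn, hnN⟩ q hq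
    have hpp := exactPrimePowers.isPrimePow_of_mem hq
    have hqn := Nat.le_of_dvd hn (exactPrimePowers.dvd_of_mem hq)
    exact mem_filter.2 ⟨mem_Ioc.2 ⟨hpp.pos, hqn.trans hnN⟩, hpp⟩
  calc ∑ n ∈ Ioc 0 N, f n = ∑ n ∈ Ioc 0 N, ∏ q ∈ exactPrimePowers n, f q :=
        sum_congr rfl fun n hn ↦
          (exactPrimePowers.prod_eq_of_multiplicative h1 hmul (mem_Ioc.1 hn).1.ne').symm
    _ = ∑ t ∈ (Ioc 0 N).image exactPrimePowers, ∏ q ∈ t, f q :=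
        (sum_image (f := fun t ↦ ∏ q ∈ t, f q) hinj).symm
    _ ≤ ∑ t ∈ Q.powerset, ∏ q ∈ t, f q :=
        sum_le_sum_of_subset_of_nonneg hsub fun _ _ _ ↦ prod_nonneg fun q _ ↦ hnn q
    _ = ∏ q ∈ Q, (1 + f q) := (prod_one_add Q).symm
    _ ≤ exp (∑ q ∈ Q, f q) := prod_one_add_le_exp_sum Q hnn

lemma sum_Ioc_convolution {R : Type*} [Semiring R] (f g : ℕ → R) (N : ℕ) :
    ∑ n ∈ Ioc 0 N, LSeries.convolution f g n = ∑ m ∈ Ioc 0 N, f m * ∑ k ∈ Ioc 0 (N / m), g k := by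
  rw [LSeries.convolution, ArithmeticFunction.sum_Ioc_mul_eq_sum_sum]
  have hcoe : ∀ (h : ℕ → R) {n M}, n ∈ Ioc 0 M → toArithmeticFunction h n = h n :=
    fun h n M hn ↦ if_neg (mem_Ioc.1 hn).1.ne'
  refine sum_congr rfl fun m hm ↦ ?_
  rw [hcoe f hm, sum_congr rfl fun k hk ↦ hcoe g hk]

/-- The function `f q * log q` on prime powers `q`, extended by zero. Its Dirichlet convolution with
a nonnegative multiplicative `f` dominates `f n * log n`. -/
noncomputable def logWeight (f : ℕ → ℝ) (q : ℕ) : ℝ :=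
  if IsPrimePow q then f q * log q else 0

lemma mul_log_le_convolution {f : ℕ → ℝ} (hnn : ∀ n, 0 ≤ f n)
    (hmul : ∀ m n : ℕ, m.Coprime n → f (m * n) = f m * f n) {n : ℕ} (hn : n ≠ 0) :
    f n * log n ≤ LSeries.convolution f (logWeight f) n := by
  have hsplit : ∀ q ∈ exactPrimePowers n, f n * log q = f (n / q) * logWeight f q := by
    intro q hq
    rw [logWeight, if_pos (exactPrimePowers.isPrimePow_of_mem hq), ← mul_assoc,
      ← hmul _ _ (exactPrimePowers.coprime_div_of_mem hq),
      Nat.div_mul_cancel (exactPrimePowers.dvd_of_mem hq)]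
  have hweight : ∀ q, 0 ≤ logWeight f q := fun q ↦
    ite_nonneg (mul_nonneg (hnn q) (log_natCast_nonneg q)) le_rfl
  calc f n * log n = ∑ q ∈ exactPrimePowers n, f (n / q) * logWeight f q := by
        rw [← exactPrimePowers.sum_log_eq hn, mul_sum, sum_congr rfl hsplit]
    _ ≤ ∑ q ∈ n.divisors, f (n / q) * logWeight f q :=
        sum_le_sum_of_subset_of_nonneg
          (fun q hq ↦ Nat.mem_divisors.2 ⟨exactPrimePowers.dvd_of_mem hq, hn⟩)
          fun q _ _ ↦ mul_nonneg (hnn _) (hweight q)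
    _ = LSeries.convolution f (logWeight f) n := by
        rw [LSeries.convolution_def]
        exact (Nat.sum_divisorsAntidiagonal' (f := fun m q ↦ f m * logWeight f q)).symm

lemma sum_mul_log_le {f : ℕ → ℝ} {K : ℝ} (hnn : ∀ n, 0 ≤ f n)
    (hmul : ∀ m n : ℕ, m.Coprime n → f (m * n) = f m * f n)
    (hK : ∀ N : ℕ, ∑ q ∈ Ioc 0 N with IsPrimePow q, f q * log q ≤ K * N) (N : ℕ) :
    ∑ n ∈ Ioc 0 N, f n * log n ≤ K * (N * ∑ m ∈ Ioc 0 N, f m / m) := by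
  have hK0 : 0 ≤ K := by
    refine (sum_nonneg fun q _ ↦ ?_).trans ((hK 1).trans_eq (by simp))
    exact mul_nonneg (hnn q) (log_natCast_nonneg q)
  calc ∑ n ∈ Ioc 0 N, f n * log n ≤ ∑ n ∈ Ioc 0 N, LSeries.convolution f (logWeight f) n :=
        sum_le_sum fun n hn ↦ mul_log_le_convolution hnn hmul (mem_Ioc.1 hn).1.ne'
    _ = ∑ m ∈ Ioc 0 N, f m * ∑ q ∈ Ioc 0 (N / m) with IsPrimePow q, f q * log q := by
        simp only [sum_Ioc_convolution, logWeight, sum_filter]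
    _ ≤ ∑ m ∈ Ioc 0 N, f m * (K * (N / m)) := by
        gcongr with m
        · exact hnn m
        · exact (hK _).trans (mul_le_mul_of_nonneg_left Nat.cast_div_le hK0)
    _ = K * (N * ∑ m ∈ Ioc 0 N, f m / m) := by
        simp only [mul_sum]
        exact sum_congr rfl fun m _ ↦ by ring

-- `log N = log n + log (N / n)` and `log (N / n) ≤ N / n`.
theorem log_mul_sum_le {f : ℕ → ℝ} {K : ℝ} (hnn : ∀ n, 0 ≤ f n)
    (hmul : ∀ m n : ℕ, m.Coprime n → f (m * n) = f m * f n)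
    (hK : ∀ N : ℕ, ∑ q ∈ Ioc 0 N with IsPrimePow q, f q * log q ≤ K * N) (N : ℕ) :
    log N * ∑ n ∈ Ioc 0 N, f n ≤ (K + 1) * (N * ∑ m ∈ Ioc 0 N, f m / m) := by
  have hlog : ∀ n ∈ Ioc 0 N, log N ≤ log n + N / n := by
    intro n hn
    obtain ⟨hn0, hnN⟩ := mem_Ioc.1 hn
    have hquot : log (N / n) ≤ N / n := log_le_self (by positivity)
    rw [log_div (mod_cast (hn0.trans_le hnN).ne') (mod_cast hn0.ne')] at hquot
    linarith
  calc log N * ∑ n ∈ Ioc 0 N, f n ≤ ∑ n ∈ Ioc 0 N, (log n + N / n) * f n := by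
        rw [mul_sum]
        exact sum_le_sum fun n hn ↦ mul_le_mul_of_nonneg_right (hlog n hn) (hnn n)
    _ = ∑ n ∈ Ioc 0 N, f n * log n + N * ∑ m ∈ Ioc 0 N, f m / m := by
        rw [mul_sum, ← sum_add_distrib]
        exact sum_congr rfl fun n _ ↦ by ring
    _ ≤ (K + 1) * (N * ∑ m ∈ Ioc 0 N, f m / m) := by
        linear_combination sum_mul_log_le hnn hmul hK N

end SumMultiplicative

section PrimePowerSums

open Finset Real

lemma sum_isPrimePow_eq_add {M : Type*} [AddCommMonoid M] (g : ℕ → M) (N : ℕ) :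
    ∑ q ∈ Ioc 0 N with IsPrimePow q, g q =
      ∑ p ∈ N.primesLE, g p + ∑ q ∈ Ioc 0 N with IsPrimePow q ∧ ¬q.Prime, g q := by
  have hprime : ∀ q : ℕ, IsPrimePow q ∧ q.Prime ↔ q.Prime := fun q ↦
    and_iff_right_of_imp Nat.Prime.isPrimePow
  rw [← sum_filter_add_sum_filter_not _ Nat.Prime, filter_filter, filter_filter,
    Nat.primesLE_eq_filter_Ioc_zero]
  simp only [hprime]

lemma sum_isPrimePow_mul_log_le {f : ℕ → ℝ} {A B : ℝ} {N : ℕ} (hnn : ∀ n, 0 ≤ f n)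
    (hprime : ∑ p ∈ N.primesLE, f p * log p ≤ A * N)
    (hpow : ∑ q ∈ Ioc 0 N with IsPrimePow q ∧ ¬q.Prime, f q * log q / q ≤ B) :
    ∑ q ∈ Ioc 0 N with IsPrimePow q, f q * log q ≤ (A + B) * N := by
  have hproper : ∑ q ∈ Ioc 0 N with IsPrimePow q ∧ ¬q.Prime, f q * log q ≤ B * N := by
    refine le_trans ?_ (mul_le_mul_of_nonneg_right hpow N.cast_nonneg)
    rw [sum_mul]
    refine sum_le_sum fun q hq ↦ ?_
    obtain ⟨hq0, hqN⟩ := mem_Ioc.1 (mem_filter.1 hq).1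
    rw [div_mul_eq_mul_div, le_div_iff₀ (mod_cast hq0)]
    exact mul_le_mul_of_nonneg_left (mod_cast hqN) (mul_nonneg (hnn q) (log_natCast_nonneg q))
  rw [sum_isPrimePow_eq_add, add_mul]
  exact add_le_add hprime hproper

lemma sum_isPrimePow_div_le {f : ℕ → ℝ} {B : ℝ} {N : ℕ} (hnn : ∀ n, 0 ≤ f n)
    (hpow : ∑ q ∈ Ioc 0 N with IsPrimePow q ∧ ¬q.Prime, f q * log q / q ≤ B) :
    ∑ q ∈ Ioc 0 N with IsPrimePow q, f q / q ≤ ∑ p ∈ N.primesLE, f p / p + B := by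
  rw [sum_isPrimePow_eq_add]
  refine add_le_add_right ((sum_le_sum fun q hq ↦ ?_).trans hpow) _
  obtain ⟨hpp, hnp⟩ := (mem_filter.1 hq).2
  have hq3 : 3 ≤ q :=
    Nat.succ_le_of_lt (hpp.two_le.lt_of_ne' fun h ↦ hnp (h ▸ Nat.prime_two))
  have hlog : 1 ≤ log q := by
    rw [le_log_iff_exp_le (mod_cast hpp.pos)]
    exact exp_one_lt_three.le.trans (mod_cast hq3)
  gcongr
  exact le_mul_of_one_le_right (hnn q) hlog

lemma sum_properPrimePow_le_tsum {g : ℕ → ℝ} {G : ℕ × ℕ → ℝ} (hG : Summable G) (hG0 : 0 ≤ G)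
    (hg : ∀ p k : ℕ, p.Prime → g (p ^ (k + 2)) ≤ G (p, k)) (N : ℕ) :
    ∑ q ∈ Ioc 0 N with IsPrimePow q ∧ ¬q.Prime, g q ≤ ∑' x, G x := by
  set Q := {q ∈ Ioc 0 N | IsPrimePow q ∧ ¬q.Prime}
  have hparam : ∀ q ∈ Q, ∃ x : ℕ × ℕ, x.1.Prime ∧ x.1 ^ (x.2 + 2) = q := by
    intro q hq
    obtain ⟨hpp, hnp⟩ := (mem_filter.1 hq).2
    obtain ⟨p, k, hp, hk, rfl⟩ := (isPrimePow_nat_iff q).1 hpp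
    have hk1 : k ≠ 1 := by
      rintro rfl
      exact hnp (by rwa [pow_one])
    exact ⟨(p, k - 2), hp, congrArg (p ^ ·) (show k - 2 + 2 = k by lia)⟩
  choose! φ hφ_prime hφ using hparam
  have hinj : Set.InjOn φ Q := fun q hq q' hq' h ↦ by rw [← hφ q hq, h, hφ q' hq']
  calc ∑ q ∈ Q, g q ≤ ∑ q ∈ Q, G (φ q) := by
        refine sum_le_sum fun q hq ↦ ?_
        simpa only [hφ q hq] using hg _ (φ q).2 (hφ_prime q hq)
    _ = ∑ x ∈ Q.image φ, G x := (sum_image hinj).symm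
    _ ≤ ∑' x, G x := hG.sum_le_tsum _ fun x _ ↦ hG0 x

lemma summable_log_div_sq : Summable fun n : ℕ ↦ log n / (n : ℝ) ^ 2 := by
  have hdom : Summable fun n : ℕ ↦ 2 * (n : ℝ) ^ (1 / 2 - (2 : ℕ) : ℝ) :=
    (summable_nat_rpow.2 (by norm_num)).mul_left 2
  refine .of_nonneg_of_le (fun n ↦ div_nonneg (log_natCast_nonneg n) (by positivity))
    (fun n ↦ ?_) hdom
  rcases eq_or_ne n 0 with rfl | hn
  · simp [rpow_nonneg]
  · rw [rpow_sub_natCast (Nat.cast_ne_zero.2 hn), ← mul_div_assoc]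
    gcongr
    linear_combination log_natCast_le_rpow_div n (one_half_pos (α := ℝ))

lemma summable_add_two_sq_div_two_pow : Summable fun k : ℕ ↦ ((k : ℝ) + 2) ^ 2 / 2 ^ k := by
  have hgeom : Summable fun k : ℕ ↦ (k : ℝ) ^ 2 * (1 / 2) ^ k :=
    summable_pow_mul_geometric_of_norm_lt_one 2 (by norm_num)
  refine (((summable_nat_add_iff 2).2 hgeom).mul_left 4).congr fun k ↦ ?_
  push_cast
  rw [one_div_pow]
  field_simp
  ring

lemma summable_log_div_sq_mul_sq_div_two_pow :
    Summable fun x : ℕ × ℕ ↦ log x.1 / (x.1 : ℝ) ^ 2 * (((x.2 : ℝ) + 2) ^ 2 / 2 ^ x.2) :=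
  summable_log_div_sq.mul_of_nonneg summable_add_two_sq_div_two_pow
    (fun n ↦ div_nonneg (log_natCast_nonneg n) (by positivity)) fun k ↦ by positivity

lemma exists_sum_properPrimePow_le {f : ℕ → ℝ} {B : ℝ} (hB0 : 0 ≤ B)
    (hB : ∀ p k : ℕ, p.Prime → 1 ≤ k → f (p ^ k) ≤ B * k) :
    ∃ C : ℝ, ∀ N : ℕ, ∑ q ∈ Ioc 0 N with IsPrimePow q ∧ ¬q.Prime, f q * log q / q ≤ C := by
  refine ⟨_, sum_properPrimePow_le_tsum (summable_log_div_sq_mul_sq_div_two_pow.mul_left B)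
    (fun x ↦ ?_) fun p k hp ↦ ?_⟩
  · have := log_natCast_nonneg x.1
    exact mul_nonneg hB0 (by positivity)
  · have hp0 : (0 : ℝ) < p := mod_cast hp.pos
    have hp2 : (2 : ℝ) ≤ p := mod_cast hp.two_le
    calc f (p ^ (k + 2)) * log ↑(p ^ (k + 2)) / ↑(p ^ (k + 2))
        = f (p ^ (k + 2)) * ((k + 2) * log p) / (p ^ 2 * p ^ k) := by
          push_cast
          rw [log_pow, ← pow_add, add_comm 2 k]
          push_cast
          rfl
      _ ≤ B * (k + 2) * ((k + 2) * log p) / (p ^ 2 * 2 ^ k) := by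
          gcongr
          exact_mod_cast hB p (k + 2) hp (by lia)
      _ = B * (log p / p ^ 2 * ((k + 2) ^ 2 / 2 ^ k)) := by ring

lemma sum_primesLE_mul_log_le {f : ℕ → ℝ} {B : ℝ} (hB0 : 0 ≤ B)
    (hB : ∀ p : ℕ, p.Prime → f p ≤ B) (N : ℕ) :
    ∑ p ∈ N.primesLE, f p * log p ≤ B * log 4 * N := by
  calc ∑ p ∈ N.primesLE, f p * log p ≤ ∑ p ∈ N.primesLE, B * log p := by
        gcongr with p hp
        exact hB p (Nat.prime_of_mem_primesLE hp)
    _ = B * Chebyshev.theta N := by rw [← mul_sum, Chebyshev.theta_eq_sum_primesLE_log]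
    _ ≤ B * log 4 * N := by
        rw [mul_assoc]
        gcongr
        exact Chebyshev.theta_le_log4_mul_x N.cast_nonneg

end PrimePowerSums

section HalberstamRichert

open Finset Real

theorem sum_div_le_exp {f : ℕ → ℝ} {B : ℝ} {N : ℕ} (hnn : ∀ n, 0 ≤ f n) (h1 : f 1 = 1)
    (hmul : ∀ m n : ℕ, m.Coprime n → f (m * n) = f m * f n)
    (hpow : ∑ q ∈ Ioc 0 N with IsPrimePow q ∧ ¬q.Prime, f q * log q / q ≤ B) :
    ∑ m ∈ Ioc 0 N, f m / m ≤ exp (∑ p ∈ N.primesLE, f p / p + B) := by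
  have hmul_div : ∀ m n : ℕ, m.Coprime n → f (m * n) / ↑(m * n) = f m / m * (f n / n) := by
    intro m n hmn
    rw [hmul m n hmn, Nat.cast_mul, mul_div_mul_comm]
  exact (sum_le_exp_sum_isPrimePow (fun n ↦ div_nonneg (hnn n) n.cast_nonneg) (by simp [h1])
    hmul_div N).trans (exp_le_exp.2 (sum_isPrimePow_div_le hnn hpow))

lemma exists_exp_sum_div_le :
    ∃ c > 0, ∀ (f : ℕ → ℝ) (N : ℕ), 2 ≤ N →
      exp (∑ p ∈ N.primesLE, f p / p) ≤ c * log N * exp (∑ p ∈ N.primesLE, (f p - 1) / p) := by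
  obtain ⟨c, hc⟩ := exists_sum_primesLE_one_div_le
  refine ⟨exp c, exp_pos c, fun f N hN ↦ ?_⟩
  have hlog : 0 < log N := log_pos (mod_cast hN)
  calc exp (∑ p ∈ N.primesLE, f p / p)
      = exp (∑ p ∈ N.primesLE, (1 : ℝ) / p + ∑ p ∈ N.primesLE, (f p - 1) / p) := by
        simp only [← sum_add_distrib, ← add_div, add_sub_cancel]
    _ ≤ exp (log (log N) + c + ∑ p ∈ N.primesLE, (f p - 1) / p) := by
        gcongr
        exact hc N hN
    _ = exp c * log N * exp (∑ p ∈ N.primesLE, (f p - 1) / p) := by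
        rw [exp_add, exp_add, exp_log hlog, mul_comm (log N)]

theorem exists_sum_le_mul_exp {f : ℕ → ℝ} (hnn : ∀ n, 0 ≤ f n) (h1 : f 1 = 1)
    (hmul : ∀ m n : ℕ, m.Coprime n → f (m * n) = f m * f n)
    (hprime : ∃ A : ℝ, ∀ N : ℕ, ∑ p ∈ N.primesLE, f p * log p ≤ A * N)
    (hpow : ∃ B : ℝ, ∀ N : ℕ,
      ∑ q ∈ Ioc 0 N with IsPrimePow q ∧ ¬q.Prime, f q * log q / q ≤ B) :
    ∃ C > 0, ∀ N : ℕ, 2 ≤ N →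
      ∑ n ∈ Ioc 0 N, f n ≤ C * N * exp (∑ p ∈ N.primesLE, (f p - 1) / p) := by
  obtain ⟨A, hA⟩ := hprime
  obtain ⟨B, hB⟩ := hpow
  obtain ⟨c, hc, hexp⟩ := exists_exp_sum_div_le
  have hA0 : 0 ≤ A := by simpa using hA 1
  have hB0 : 0 ≤ B := by simpa using hB 0
  refine ⟨(A + B + 1) * (exp B * c), by positivity, fun N hN ↦ ?_⟩
  set E := exp (∑ p ∈ N.primesLE, (f p - 1) / p)
  have hlog : 0 < log N := log_pos (mod_cast hN)
  have hdiv : ∑ m ∈ Ioc 0 N, f m / m ≤ exp B * (c * log N * E) := by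
    refine (sum_div_le_exp hnn h1 hmul (hB N)).trans ?_
    rw [add_comm, exp_add]
    gcongr
    exact hexp f N hN
  refine le_of_mul_le_mul_left ?_ hlog
  calc log N * ∑ n ∈ Ioc 0 N, f n ≤ (A + B + 1) * (N * ∑ m ∈ Ioc 0 N, f m / m) :=
        log_mul_sum_le hnn hmul (fun M ↦ sum_isPrimePow_mul_log_le hnn (hA M) (hB M)) N
    _ ≤ (A + B + 1) * (N * (exp B * (c * log N * E))) := by gcongr
    _ = log N * ((A + B + 1) * (exp B * c) * N * E) := by ring

theorem halberstam_richert_weak_general {f : ℕ → ℝ} (hnn : ∀ n, 0 ≤ f n) (h1 : f 1 = 1)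
    (hmul : ∀ m n : ℕ, m.Coprime n → f (m * n) = f m * f n)
    (hprime : ∃ A : ℝ, ∀ N : ℕ, ∑ p ∈ N.primesLE, f p * log p ≤ A * N)
    (hpow : ∃ B : ℝ, ∀ N : ℕ,
      ∑ q ∈ Ioc 0 N with IsPrimePow q ∧ ¬q.Prime, f q * log q / q ≤ B) :
    ∃ C > 0, ∀ X : ℝ, 2 ≤ X → (1 / X) * ∑ m ∈ Icc 1 ⌊X⌋₊, f m ≤
      C * exp (∑ p ∈ (range (⌊X⌋₊ + 1)).filter Nat.Prime, (f p - 1) / p) := by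
  obtain ⟨C, hC, hsum⟩ := exists_sum_le_mul_exp hnn h1 hmul hprime hpow
  refine ⟨C, hC, fun X hX ↦ ?_⟩
  rw [← Nat.primesLE_eq_filter_range, one_div_mul_eq_div, div_le_iff₀ (by linarith), mul_right_comm]
  refine (hsum ⌊X⌋₊ (Nat.le_floor hX)).trans ?_
  gcongr
  exact Nat.floor_le (by linarith)

end HalberstamRichert

/-- Weak form of the Halberstam–Richert inequality: if `f` is a nonnegative
multiplicative function with `Σ_{n ≤ x} f(n) = O(x)` and `f(p^k) ≤ B k`, then
`(1/X) Σ_{m ≤ X} f(m) ≤ C exp(Σ_{p ≤ X} (f(p) - 1)/p) + C / log X` for large `X`. -/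
theorem halberstam_richert_weak
    (f : ℕ → ℝ)
    (hnn : ∀ n, 0 ≤ f n)
    (h1 : f 1 = 1)
    (hmul : ∀ m n : ℕ, Nat.Coprime m n → f (m * n) = f m * f n)
    (hO : ∃ A : ℝ, ∀ x : ℝ, 1 ≤ x → ∑ n ∈ Finset.Icc 1 ⌊x⌋₊, f n ≤ A * x)
    (hB : ∃ B : ℝ, ∀ p k : ℕ, p.Prime → 1 ≤ k → f (p ^ k) ≤ B * k) :
    ∃ C > (0 : ℝ), ∃ X₀ : ℝ, ∀ X : ℝ, X₀ ≤ X →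
      (1 / X) * ∑ m ∈ Finset.Icc 1 ⌊X⌋₊, f m ≤
        C * Real.exp (∑ p ∈ (Finset.range (⌊X⌋₊ + 1)).filter Nat.Prime, (f p - 1) / p)
          + C / Real.log X := by
  obtain ⟨B, hB⟩ := hB
  have hfB : ∀ p : ℕ, p.Prime → f p ≤ B := fun p hp ↦ by simpa using hB p 1 hp le_rfl
  have hB0 : 0 ≤ B := (hnn 2).trans (hfB 2 Nat.prime_two)
  obtain ⟨C, hC, hbound⟩ := halberstam_richert_weak_general hnn h1 hmul
    ⟨_, sum_primesLE_mul_log_le hB0 hfB⟩ (exists_sum_properPrimePow_le hB0 hB)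
  exact ⟨C, hC, 2, fun X hX ↦ (hbound X hX).trans <|
    le_add_of_nonneg_right (div_nonneg hC.le (Real.log_nonneg (by linarith)))⟩
end

section
/- Let f be a nonnegative multiplicative function such that there is a constant B with f(p^l) ≤ B·l for all primes p and all l ≥ 1. Then there is a constant C (depending only on B) such that for all X ≥ 2, Σ_{m ≤ X} f(m)/m ≤ C · Π_{p ≤ X, p prime} (1 + f(p)/p). -/
/-!
Expand the product over primes of the local series `Σ f(pˡ)/pˡ`: the result is the sum of `f(m)/m`
over all `m` whose prime factors are at most `X`, which dominates the sum over `m ≤ X`. Each local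
series is at most `(1 + f(p)/p) · exp t` with `t = Σ_{l ≥ 2} f(pˡ)/pˡ`. Since
`pˡ⁺² ≥ p² · 2ˡ`, this tail is `O(1/p²)` uniformly in `f`, so the product of the exponential factors
is bounded. The bound `B l` gives `t ≤ 6B/p²`, as `Σ (l + 2)/2ˡ = 6`, and `ζ(2) = π²/6` then yields
the constant `exp(π²B)`.
-/

section EulerProduct

variable {g : ℕ → ℝ} {N : ℕ} {s : Finset ℕ}

lemma sum_le_prod_primesBelow_tsum (hg : ∀ n, 0 ≤ g n) (hg_one : g 1 = 1)
    (hg_mul : ∀ {m n : ℕ}, m.Coprime n → g (m * n) = g m * g n)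
    (hg_sum : ∀ {p : ℕ}, p.Prime → Summable fun l ↦ g (p ^ l))
    (hs : ∀ m ∈ s, m ∈ N.smoothNumbers) :
    ∑ m ∈ s, g m ≤ ∏ p ∈ N.primesBelow, ∑' l, g (p ^ l) := by
  have euler := (EulerProduct.summable_and_hasSum_smoothNumbers_prod_primesBelow_tsum
    hg_one hg_mul (fun hp ↦ (hg_sum hp).norm) N).2
  rw [← Finset.sum_subtype_of_mem g hs]
  exact sum_le_hasSum _ (fun m _ ↦ hg m) euler

lemma tsum_le_one_add_mul_exp_tsum {u : ℕ → ℝ} (hu : ∀ l, 0 ≤ u l) (hu_zero : u 0 = 1)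
    (hu_sum : Summable u) :
    ∑' l, u l ≤ (1 + u 1) * Real.exp (∑' l, u (l + 2)) := by
  have tail_nonneg : 0 ≤ ∑' l, u (l + 2) := tsum_nonneg fun l ↦ hu (l + 2)
  calc
    ∑' l, u l = 1 + u 1 + ∑' l, u (l + 2) := by
      rw [← hu_sum.sum_add_tsum_nat_add 2, Finset.sum_range_succ, Finset.sum_range_one, hu_zero]
    _ ≤ (1 + u 1) * (∑' l, u (l + 2) + 1) := by
      linarith [mul_nonneg (hu 1) tail_nonneg]
    _ ≤ (1 + u 1) * Real.exp (∑' l, u (l + 2)) :=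
      mul_le_mul_of_nonneg_left (Real.add_one_le_exp _) (add_nonneg zero_le_one (hu 1))

lemma sum_le_exp_mul_prod_primesBelow_one_add (hg : ∀ n, 0 ≤ g n) (hg_one : g 1 = 1)
    (hg_mul : ∀ {m n : ℕ}, m.Coprime n → g (m * n) = g m * g n)
    (hg_sum : ∀ {p : ℕ}, p.Prime → Summable fun l ↦ g (p ^ l))
    (hs : ∀ m ∈ s, m ∈ N.smoothNumbers) :
    ∑ m ∈ s, g m ≤
      Real.exp (∑ p ∈ N.primesBelow, ∑' l, g (p ^ (l + 2))) * ∏ p ∈ N.primesBelow, (1 + g p) := by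
  have local_factor_le (p : ℕ) (hp : p ∈ N.primesBelow) :
      ∑' l, g (p ^ l) ≤ (1 + g p) * Real.exp (∑' l, g (p ^ (l + 2))) := by
    simpa only [pow_one] using tsum_le_one_add_mul_exp_tsum (u := fun l ↦ g (p ^ l))
      (fun l ↦ hg _) (by rw [pow_zero, hg_one]) (hg_sum (Nat.prime_of_mem_primesBelow hp))
  calc
    ∑ m ∈ s, g m ≤ ∏ p ∈ N.primesBelow, ∑' l, g (p ^ l) :=
      sum_le_prod_primesBelow_tsum hg hg_one hg_mul hg_sum hs
    _ ≤ ∏ p ∈ N.primesBelow, (1 + g p) * Real.exp (∑' l, g (p ^ (l + 2))) :=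
      Finset.prod_le_prod (fun p _ ↦ tsum_nonneg fun l ↦ hg _) local_factor_le
    _ = _ := by rw [Finset.prod_mul_distrib, ← Real.exp_sum, mul_comm]

end EulerProduct

section PowerSeriesTail

variable {a b : ℕ → ℝ} {r x K : ℝ}

lemma div_pow_add_two_le {l : ℕ} (ha : 0 ≤ a l) (hab : a l ≤ b l) (hr : 0 < r) (hrx : r ≤ x) :
    a l / x ^ (l + 2) ≤ b l / r ^ l / x ^ 2 := by
  have hx : 0 < x := hr.trans_le hrx
  calc
    a l / x ^ (l + 2) = a l / x ^ l / x ^ 2 := by rw [pow_add, div_div]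
    _ ≤ b l / r ^ l / x ^ 2 := by gcongr; exact ha.trans hab

lemma summable_div_pow_add_two (ha : ∀ l, 0 ≤ a l) (hab : ∀ l, a l ≤ b l)
    (hb : Summable fun l ↦ b l / r ^ l) (hr : 0 < r) (hrx : r ≤ x) :
    Summable fun l ↦ a l / x ^ (l + 2) :=
  have hx : 0 ≤ x := hr.le.trans hrx
  .of_nonneg_of_le (fun l ↦ div_nonneg (ha l) (pow_nonneg hx _))
    (fun l ↦ div_pow_add_two_le (ha l) (hab l) hr hrx) (hb.div_const (x ^ 2))

lemma tsum_div_pow_add_two_le (ha : ∀ l, 0 ≤ a l) (hab : ∀ l, a l ≤ b l)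
    (hb : HasSum (fun l ↦ b l / r ^ l) K) (hr : 0 < r) (hrx : r ≤ x) :
    ∑' l, a l / x ^ (l + 2) ≤ K / x ^ 2 :=
  hasSum_le (fun l ↦ div_pow_add_two_le (ha l) (hab l) hr hrx)
    (summable_div_pow_add_two ha hab hb.summable hr hrx).hasSum (hb.div_const (x ^ 2))

lemma hasSum_mul_add_two_div_two_pow (B : ℝ) :
    HasSum (fun l : ℕ ↦ B * (l + 2) / 2 ^ l) (6 * B) := by
  have linear_part : HasSum (fun l : ℕ ↦ (l : ℝ) * (1 / 2) ^ l) 2 := by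
    have value : (1 / 2 : ℝ) / (1 - 1 / 2) ^ 2 = 2 := by norm_num
    simpa only [value] using
      hasSum_coe_mul_geometric_of_norm_lt_one (r := (1 / 2 : ℝ)) (by norm_num)
  rw [show 6 * B = B * (2 + 2 * 2) by ring]
  refine ((linear_part.add (hasSum_geometric_two.mul_left 2)).mul_left B).congr_fun fun l ↦ ?_
  rw [one_div_pow]
  ring

end PowerSeriesTail

lemma sum_div_sq_le {K : ℝ} (hK : 0 ≤ K) (s : Finset ℕ) :
    ∑ n ∈ s, K / (n : ℝ) ^ 2 ≤ Real.pi ^ 2 / 6 * K := by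
  have zeta_two_le : ∑ n ∈ s, 1 / (n : ℝ) ^ 2 ≤ Real.pi ^ 2 / 6 :=
    sum_le_hasSum s (fun n _ ↦ by positivity) hasSum_zeta_two
  calc
    ∑ n ∈ s, K / (n : ℝ) ^ 2 = (∑ n ∈ s, 1 / (n : ℝ) ^ 2) * K := by
      simp only [Finset.sum_mul, one_div_mul_eq_div]
    _ ≤ Real.pi ^ 2 / 6 * K := mul_le_mul_of_nonneg_right zeta_two_le hK

theorem sum_div_le_prod_of_multiplicative_general {f b : ℕ → ℝ} {K : ℝ}
    (hf : ∀ n, 0 ≤ f n) (hf_one : f 1 = 1)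
    (hf_mul : ∀ m n : ℕ, m.Coprime n → f (m * n) = f m * f n)
    (hb : HasSum (fun l ↦ b l / 2 ^ l) K)
    (hfb : ∀ p l : ℕ, p.Prime → f (p ^ (l + 2)) ≤ b l) (N : ℕ) :
    ∑ m ∈ Finset.Icc 1 N, f m / m ≤
      Real.exp (Real.pi ^ 2 / 6 * K) * ∏ p ∈ (N + 1).primesBelow, (1 + f p / p) := by
  have g_nonneg (n : ℕ) : 0 ≤ f n / n := div_nonneg (hf n) n.cast_nonneg
  have g_mul {m n : ℕ} (hmn : m.Coprime n) :
      f (m * n) / (m * n : ℕ) = f m / m * (f n / n) := by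
    rw [hf_mul m n hmn, Nat.cast_mul, mul_div_mul_comm]
  have g_summable {p : ℕ} (hp : p.Prime) : Summable fun l ↦ f (p ^ l) / (p ^ l : ℕ) := by
    rw [← summable_nat_add_iff 2]
    simpa only [Nat.cast_pow] using summable_div_pow_add_two (fun l ↦ hf (p ^ (l + 2)))
      (hfb p · hp) hb.summable two_pos (Nat.ofNat_le_cast.2 hp.two_le)
  have tail_le {p : ℕ} (hp : p.Prime) :
      ∑' l, f (p ^ (l + 2)) / (p ^ (l + 2) : ℕ) ≤ K / (p : ℝ) ^ 2 := by
    simpa only [Nat.cast_pow] using tsum_div_pow_add_two_le (fun l ↦ hf (p ^ (l + 2)))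
      (hfb p · hp) hb two_pos (Nat.ofNat_le_cast.2 hp.two_le)
  have K_nonneg : 0 ≤ K :=
    hb.nonneg fun l ↦ div_nonneg ((hf _).trans (hfb 2 l Nat.prime_two)) (by positivity)
  have tails_le :
      ∑ p ∈ (N + 1).primesBelow, ∑' l, f (p ^ (l + 2)) / (p ^ (l + 2) : ℕ) ≤
        Real.pi ^ 2 / 6 * K :=
    (Finset.sum_le_sum fun p hp ↦ tail_le (Nat.prime_of_mem_primesBelow hp)).trans
      (sum_div_sq_le K_nonneg _)
  have smooth (m : ℕ) (hm : m ∈ Finset.Icc 1 N) : m ∈ (N + 1).smoothNumbers := by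
    obtain ⟨one_le, le_N⟩ := Finset.mem_Icc.1 hm
    exact Nat.mem_smoothNumbers_of_lt one_le (Nat.lt_succ_of_le le_N)
  refine (sum_le_exp_mul_prod_primesBelow_one_add (g := fun n ↦ f n / n) g_nonneg
    (by simp [hf_one]) g_mul g_summable smooth).trans ?_
  exact mul_le_mul_of_nonneg_right (Real.exp_le_exp.2 tails_le)
    (Finset.prod_nonneg fun p _ ↦ add_nonneg zero_le_one (g_nonneg p))

/-- For a nonnegative multiplicative function `f` with `f(p^l) ≤ B l`, there is a
constant `C` depending only on `B` such that
`Σ_{m ≤ X} f(m)/m ≤ C Π_{p ≤ X} (1 + f(p)/p)` for all `X ≥ 2`. -/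
theorem sum_div_le_prod_of_multiplicative (B : ℝ) :
    ∃ C : ℝ, ∀ f : ℕ → ℝ,
      (∀ n, 0 ≤ f n) →
      f 1 = 1 →
      (∀ m n : ℕ, Nat.Coprime m n → f (m * n) = f m * f n) →
      (∀ p l : ℕ, p.Prime → 1 ≤ l → f (p ^ l) ≤ B * l) →
      ∀ X : ℝ, 2 ≤ X →
        ∑ m ∈ Finset.Icc 1 ⌊X⌋₊, f m / m ≤
          C * ∏ p ∈ (Finset.range (⌊X⌋₊ + 1)).filter Nat.Prime, (1 + f p / p) :=
  ⟨Real.exp (Real.pi ^ 2 / 6 * (6 * B)), fun _ hf hf_one hf_mul hfB X _ ↦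
    sum_div_le_prod_of_multiplicative_general hf hf_one hf_mul (hasSum_mul_add_two_div_two_pow B)
      (fun p l hp ↦ mod_cast hfB p (l + 2) hp (by lia)) ⌊X⌋₊⟩
end

section
/- (Mertens' theorem.) Π_{p ≤ x, p prime} (1 − 1/p) is asymptotic to e^{−γ}/log x as x → ∞, where γ is Euler's constant; equivalently, lim_{x→∞} (log x) · Π_{p ≤ x, p prime} (1 − 1/p) = e^{−γ}. -/
/-!
Comparing `log N! = ∑_{n ≤ N} Λ(n) ⌊N / n⌋` with Stirling's bounds gives
`∑_{p ≤ N} log p / p = log N + O(1)`, and partial summation turns this into convergence of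
`∑_{p ≤ x} -log (1 - 1 / p) - log log x` to some constant `C`.

The constant comes from an Abelian theorem. The difference between the prime sum up to `exp u` and
the harmonic sum up to `u` tends to `C - γ` as `u → ∞`, so the difference of the Dirichlet series
`∑_p -log (1 - 1 / p) p ^ (-δ)` and `∑_n exp (-δ n) / n` has the same limit as `δ → 0+`. But the
former is `log ζ(1 + δ) + o(1) = -log δ + o(1)` by the Euler product, and the latter is
`-log (1 - exp (-δ)) = -log δ + o(1)`. Hence `C = γ`.
-/

open Filter Topology Finset Real Asymptotics MeasureTheory
open scoped ArithmeticFunction.vonMangoldt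

theorem abs_neg_log_one_sub_sub_self_le {x : ℝ} (h : x ≤ 1 / 2) :
    |-log (1 - x) - x| ≤ 2 * x ^ 2 := by
  have hpos : 0 < 1 - x := by linarith
  have upper : -log (1 - x) ≤ x / (1 - x) := by
    have := one_sub_inv_le_log_of_pos hpos
    have : x / (1 - x) = (1 - x)⁻¹ - 1 := by field_simp; ring
    linarith
  have : x / (1 - x) - x ≤ 2 * x ^ 2 := by
    rw [div_sub' hpos.ne', div_le_iff₀ hpos]
    nlinarith [mul_nonneg (sq_nonneg x) (sub_nonneg.2 h)]
  rw [abs_of_nonneg] <;> linarith [log_le_sub_one_of_pos hpos]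

theorem tendsto_log_sub_log_of_isEquivalent {α : Type*} {l : Filter α} {f g : α → ℝ} (h : f ~[l] g)
    (hf : ∀ᶠ x in l, f x ≠ 0) (hg : ∀ᶠ x in l, g x ≠ 0) :
    Tendsto (fun x ↦ log (f x) - log (g x)) l (𝓝 0) := by
  have key := ((isEquivalent_iff_tendsto_one hg).1 h).log one_ne_zero
  rw [log_one] at key
  refine key.congr' ?_
  filter_upwards [hf, hg] with x hf hg using log_div hf hg

theorem cauchySeq_sum_sub_div {X c : ℕ → ℝ} {K : ℝ} (h₀ : 0 < X 0) (hmono : Monotone X)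
    (hlim : Tendsto X atTop atTop) (hsum : ∀ n, |∑ i ∈ range (n + 1), c i - X n| ≤ K) :
    CauchySeq fun n ↦ ∑ i ∈ range n, (c (i + 1) - (X (i + 1) - X i)) / X (i + 1) := by
  have hanti : Antitone fun n ↦ (X (n + 1))⁻¹ := fun m n h ↦
    inv_anti₀ (h₀.trans_le (hmono (Nat.zero_le _))) (hmono (Nat.succ_le_succ h))
  have hbdd (n : ℕ) : ‖∑ i ∈ range n, (c (i + 1) - (X (i + 1) - X i))‖ ≤ K + K :=
    calc _ = ‖(∑ i ∈ range (n + 1), c i - X n) - (∑ i ∈ range (0 + 1), c i - X 0)‖ := by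
          rw [sum_sub_distrib, sum_range_sub, sum_range_succ', zero_add, sum_range_one]
          ring_nf
      _ ≤ K + K := (norm_sub_le _ _).trans (add_le_add (hsum n) (hsum 0))
  simpa only [smul_eq_mul, inv_mul_eq_div] using
    hanti.cauchySeq_series_mul_of_tendsto_zero_of_bounded
      (hlim.comp (tendsto_add_atTop_nat 1)).inv_tendsto_atTop hbdd

theorem summable_log_sub_log_sub_div {X : ℕ → ℝ} {B : ℝ} (h₀ : 0 < X 0)
    (hmono : Monotone X) (hstep : ∀ n, X (n + 1) - X n ≤ B) :
    Summable fun n ↦ log (X (n + 1)) - log (X n) - (X (n + 1) - X n) / X (n + 1) := by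
  have hpos (n : ℕ) : 0 < X n := h₀.trans_le (hmono n.zero_le)
  have hratio (n : ℕ) : log (X (n + 1)) - log (X n) = log (X (n + 1) / X n) :=
    (log_div (hpos _).ne' (hpos _).ne').symm
  have lower (n : ℕ) : 0 ≤ log (X (n + 1)) - log (X n) - (X (n + 1) - X n) / X (n + 1) := by
    have := one_sub_inv_le_log_of_pos (div_pos (hpos (n + 1)) (hpos n))
    rw [hratio, sub_div, div_self (hpos _).ne', ← inv_div (X (n + 1))]
    linarith
  have upper (n : ℕ) : log (X (n + 1)) - log (X n) - (X (n + 1) - X n) / X (n + 1) ≤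
      B * ((X n)⁻¹ - (X (n + 1))⁻¹) :=
    calc _ ≤ X (n + 1) / X n - 1 - (X (n + 1) - X n) / X (n + 1) := by
          rw [hratio]
          gcongr
          exact log_le_sub_one_of_pos (div_pos (hpos _) (hpos _))
      _ = (X (n + 1) - X n) * ((X n)⁻¹ - (X (n + 1))⁻¹) := by
          have := (hpos n).ne'
          have := (hpos (n + 1)).ne'
          field_simp
      _ ≤ _ := by
          gcongr
          · exact sub_nonneg.2 (inv_anti₀ (hpos n) (hmono n.le_succ))
          · exact hstep n
  refine summable_of_sum_range_le (c := B * (X 0)⁻¹) lower fun n ↦ ?_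
  have hB : 0 ≤ B := (sub_nonneg.2 (hmono (Nat.le_succ 0))).trans (hstep 0)
  calc _ ≤ B * ((X 0)⁻¹ - (X n)⁻¹) := by
        rw [← sum_range_sub' (fun i ↦ (X i)⁻¹), mul_sum]
        exact sum_le_sum fun i _ ↦ upper i
    _ ≤ B * (X 0)⁻¹ := by
        gcongr
        exact sub_le_self _ (inv_pos.2 (hpos n)).le

theorem exists_tendsto_sum_div_sub_log {X c : ℕ → ℝ} {B K : ℝ} (h₀ : 0 < X 0)
    (hmono : Monotone X) (hlim : Tendsto X atTop atTop) (hstep : ∀ n, X (n + 1) - X n ≤ B)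
    (hsum : ∀ n, |∑ i ∈ range (n + 1), c i - X n| ≤ K) :
    ∃ C, Tendsto (fun n ↦ ∑ i ∈ range (n + 1), c i / X i - log (X n)) atTop (𝓝 C) := by
  obtain ⟨C, hC⟩ := cauchySeq_tendsto_of_complete (cauchySeq_sum_sub_div h₀ hmono hlim hsum)
  have hlog := (summable_log_sub_log_sub_div h₀ hmono hstep).hasSum.tendsto_sum_nat
  refine ⟨_, ((hC.sub hlog).add_const (c 0 / X 0 - log (X 0))).congr fun n ↦ ?_⟩
  calc _ = ∑ i ∈ range n, (c (i + 1) / X (i + 1) - (log (X (i + 1)) - log (X i))) +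
        (c 0 / X 0 - log (X 0)) := by
        rw [← sum_sub_distrib]
        congr! 2 with i
        ring
    _ = _ := by
        rw [sum_sub_distrib, sum_range_sub (fun i ↦ log (X i)), sum_range_succ']
        ring

theorem log_factorial_eq_sum_vonMangoldt (N : ℕ) :
    log N.factorial = ∑ n ∈ Ioc 0 N, Λ n * ↑(N / n) := by
  rw [← ArithmeticFunction.sum_Ioc_mul_zeta_eq_sum, ArithmeticFunction.vonMangoldt_mul_zeta]
  induction N with
  | zero => simp
  | succ N ih =>
    rw [sum_Ioc_succ_top N.zero_le, ← ih, Nat.factorial_succ, Nat.cast_mul,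
      log_mul (by positivity) (by positivity), ArithmeticFunction.log_apply, add_comm]

theorem abs_log_factorial_sub_mul_log_le (N : ℕ) : |log N.factorial - N * log N| ≤ N := by
  rcases eq_or_ne N 0 with rfl | hN
  · simp
  have lower : N * log N - N ≤ log N.factorial := by
    have := Stirling.le_log_factorial_stirling hN
    have := log_natCast_nonneg N
    have : 0 ≤ log (2 * π) := log_nonneg (by linarith [pi_gt_three])
    linarith
  have upper : log N.factorial ≤ N * log N := by
    rw [← log_pow]
    exact log_le_log (by positivity) (mod_cast N.factorial_le_pow)
  rw [abs_of_nonpos] <;> linarith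

theorem abs_sum_vonMangoldt_div_sub_log_le {N : ℕ} (hN : N ≠ 0) :
    |∑ n ∈ Ioc 0 N, Λ n / n - log N| ≤ log 4 + 5 := by
  have hfloor : |N * ∑ n ∈ Ioc 0 N, Λ n / n - log N.factorial| ≤ (log 4 + 4) * N := by
    rw [log_factorial_eq_sum_vonMangoldt, mul_sum, ← sum_sub_distrib]
    calc _ ≤ ∑ n ∈ Ioc 0 N, |N * (Λ n / n) - Λ n * ↑(N / n)| := abs_sum_le_sum_abs _ _
      _ ≤ ∑ n ∈ Ioc 0 N, Λ n := sum_le_sum fun n _ ↦ ?_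
      _ ≤ _ := by simpa [Chebyshev.psi] using Chebyshev.psi_le_const_mul_self N.cast_nonneg
    have hΛ := ArithmeticFunction.vonMangoldt_nonneg (n := n)
    have hle : ((N / n : ℕ) : ℝ) ≤ N / n := Nat.cast_div_le
    have hlt : (N / n : ℝ) < (N / n : ℕ) + 1 := by
      simpa only [Nat.floor_div_eq_div] using Nat.lt_floor_add_one (N / n : ℝ)
    rw [show N * (Λ n / n) - Λ n * ↑(N / n) = Λ n * (N / n - (N / n : ℕ)) by ring, abs_mul,
      abs_of_nonneg hΛ, abs_of_nonneg (sub_nonneg.2 hle)]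
    exact mul_le_of_le_one_right hΛ (by linarith)
  have hpos : (0 : ℝ) < N := by positivity
  refine le_of_mul_le_mul_left ?_ hpos
  calc N * |∑ n ∈ Ioc 0 N, Λ n / n - log N|
      = |(N * ∑ n ∈ Ioc 0 N, Λ n / n - log N.factorial) + (log N.factorial - N * log N)| := by
        rw [← abs_of_pos hpos, ← abs_mul, abs_of_pos hpos]
        ring_nf
    _ ≤ (log 4 + 4) * N + N :=
      (abs_add_le _ _).trans (add_le_add hfloor (abs_log_factorial_sub_mul_log_le N))
    _ = N * (log 4 + 5) := by ring

theorem summable_vonMangoldt_div_not_prime :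
    Summable fun n : ℕ ↦ (if n.Prime then 0 else Λ n) / n := by
  refine (ArithmeticFunction.vonMangoldt.summable_residueClass_non_primes_div (0 : ZMod 1)).congr
    fun n ↦ ?_
  have : n ∈ {m : ℕ | (m : ZMod 1) = 0} := Subsingleton.elim _ _
  rw [ArithmeticFunction.vonMangoldt.residueClass, Set.indicator_of_mem this]

theorem exists_abs_sum_primesLE_log_div_sub_log_le :
    ∃ K, ∀ N ≠ 0, |∑ p ∈ Nat.primesLE N, log p / p - log N| ≤ K := by
  set R := ∑' n : ℕ, (if n.Prime then 0 else Λ n) / n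
  refine ⟨R + (log 4 + 5), fun N hN ↦ ?_⟩
  have hsplit : ∑ p ∈ Nat.primesLE N, log p / p =
      ∑ n ∈ Ioc 0 N, Λ n / n - ∑ n ∈ Ioc 0 N, (if n.Prime then 0 else Λ n) / n := by
    rw [Nat.primesLE_eq_filter_Ioc_zero, sum_filter, ← sum_sub_distrib]
    refine sum_congr rfl fun n _ ↦ ?_
    split_ifs with hn
    · simp [ArithmeticFunction.vonMangoldt_apply_prime hn]
    · simp
  have hnonneg (n : ℕ) : 0 ≤ (if n.Prime then 0 else Λ n) / (n : ℝ) := by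
    have := ArithmeticFunction.vonMangoldt_nonneg (n := n)
    positivity
  have hle : ∑ n ∈ Ioc 0 N, (if n.Prime then 0 else Λ n) / (n : ℝ) ≤ R :=
    summable_vonMangoldt_div_not_prime.sum_le_tsum _ fun n _ ↦ hnonneg n
  calc _ = |-(∑ n ∈ Ioc 0 N, (if n.Prime then 0 else Λ n) / (n : ℝ)) +
        (∑ n ∈ Ioc 0 N, Λ n / n - log N)| := by rw [hsplit]; ring_nf
    _ ≤ _ := by
      refine (abs_add_le _ _).trans (add_le_add ?_ (abs_sum_vonMangoldt_div_sub_log_le hN))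
      rwa [abs_neg, abs_of_nonneg (sum_nonneg fun n _ ↦ hnonneg n)]

theorem tendsto_log_floor_sub_log : Tendsto (fun x : ℝ ↦ log ⌊x⌋₊ - log x) atTop (𝓝 0) :=
  tendsto_log_sub_log_of_isEquivalent isEquivalent_nat_floor
    ((tendsto_nat_floor_atTop.eventually_ne_atTop 0).mono fun _ h ↦ Nat.cast_ne_zero.2 h)
    (eventually_ne_atTop 0)

theorem tendsto_log_log_floor_sub_log_log :
    Tendsto (fun x : ℝ ↦ log (log ⌊x⌋₊) - log (log x)) atTop (𝓝 0) := by
  have hfloor := tendsto_log_atTop.comp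
    (tendsto_natCast_atTop_atTop.comp (tendsto_nat_floor_atTop (α := ℝ)))
  exact tendsto_log_sub_log_of_isEquivalent (isEquivalent_nat_floor.log tendsto_id)
    (hfloor.eventually_ne_atTop 0) (tendsto_log_atTop.eventually_ne_atTop 0)

theorem sum_primesLE_add_two {M : Type*} [AddCommMonoid M] (f : ℕ → M) (n : ℕ) :
    ∑ p ∈ Nat.primesLE (n + 2), f p =
      ∑ i ∈ range (n + 1), if (i + 2).Prime then f (i + 2) else 0 := by
  rw [Nat.primesLE_eq_filter_range, sum_filter, sum_range_succ', sum_range_succ']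
  simp [Nat.not_prime_zero, Nat.not_prime_one]

theorem exists_tendsto_sum_primesLE_inv_sub_log_log :
    ∃ C, Tendsto (fun N : ℕ ↦ ∑ p ∈ Nat.primesLE N, (p : ℝ)⁻¹ - log (log N)) atTop (𝓝 C) := by
  obtain ⟨K, hK⟩ := exists_abs_sum_primesLE_log_div_sub_log_le
  let X (n : ℕ) : ℝ := log ↑(n + 2)
  let c (i : ℕ) : ℝ := if (i + 2).Prime then log ↑(i + 2) / ↑(i + 2) else 0
  have hpos (n : ℕ) : 0 < X n := log_pos (by norm_cast; lia)
  have hmono : Monotone X := fun m n h ↦ log_le_log (by positivity) (by gcongr)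
  have hlim : Tendsto X atTop atTop :=
    tendsto_log_atTop.comp (tendsto_natCast_atTop_atTop.comp (tendsto_add_atTop_nat 2))
  have hstep (n : ℕ) : X (n + 1) - X n ≤ log 2 := by
    rw [sub_le_iff_le_add, ← log_mul (by positivity) (by positivity)]
    exact log_le_log (by positivity) (by norm_cast; lia)
  have hsum (n : ℕ) : |∑ i ∈ range (n + 1), c i - X n| ≤ K := by
    rw [← sum_primesLE_add_two (fun p ↦ log p / p)]
    exact hK _ (by lia)
  obtain ⟨C, hC⟩ := exists_tendsto_sum_div_sub_log (hpos 0) hmono hlim hstep hsum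
  refine ⟨C, (tendsto_add_atTop_iff_nat 2).1 (hC.congr fun n ↦ ?_)⟩
  rw [sum_primesLE_add_two (fun p ↦ (p : ℝ)⁻¹)]
  congr! 2 with i
  have := (hpos i).ne'
  simp only [c, X] at this ⊢
  split_ifs
  · rw [div_right_comm, div_self this, one_div]
  · rw [zero_div]

theorem tendsto_sum_primesLE_of_hasSum {M : Type*} [AddCommMonoid M] [TopologicalSpace M]
    {f : ℕ → M} {s : M} (h : HasSum (fun p : Nat.Primes ↦ f p) s) :
    Tendsto (fun N ↦ ∑ p ∈ Nat.primesLE N, f p) atTop (𝓝 s) := by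
  have := (hasSum_subtype_iff_indicator (s := {p : ℕ | p.Prime})).1 h
  refine (this.tendsto_sum_nat.comp (tendsto_add_atTop_nat 1)).congr fun N ↦ ?_
  simp [Nat.primesLE_eq_filter_range, sum_filter, Set.indicator_apply]

theorem primes_inv_le_half (p : Nat.Primes) : (p : ℝ)⁻¹ ≤ 1 / 2 := by
  rw [one_div]
  exact inv_anti₀ two_pos (mod_cast p.prop.two_le)

theorem summable_inv_sq_primes : Summable fun p : Nat.Primes ↦ (p : ℝ)⁻¹ ^ 2 := by
  simp only [inv_pow]
  exact (summable_nat_pow_inv.2 one_lt_two).subtype {p : ℕ | p.Prime}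

theorem exists_tendsto_sum_primesLE_neg_log_sub_log_log :
    ∃ C, Tendsto (fun N : ℕ ↦ ∑ p ∈ Nat.primesLE N, -log (1 - (p : ℝ)⁻¹) - log (log N)) atTop
      (𝓝 C) := by
  obtain ⟨C, hC⟩ := exists_tendsto_sum_primesLE_inv_sub_log_log
  have hsum : Summable fun p : Nat.Primes ↦ -log (1 - (p : ℝ)⁻¹) - (p : ℝ)⁻¹ :=
    (summable_inv_sq_primes.mul_left 2).of_norm_bounded fun p ↦
      abs_neg_log_one_sub_sub_self_le (primes_inv_le_half p)
  have htail := tendsto_sum_primesLE_of_hasSum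
    (f := fun p ↦ -log (1 - (p : ℝ)⁻¹) - (p : ℝ)⁻¹) hsum.hasSum
  refine ⟨_, (hC.add htail).congr fun N ↦ ?_⟩
  rw [sum_sub_distrib]
  ring

theorem exists_tendsto_sum_primesLE_floor_neg_log_sub_log_log :
    ∃ C, Tendsto (fun x : ℝ ↦ ∑ p ∈ Nat.primesLE ⌊x⌋₊, -log (1 - (p : ℝ)⁻¹) - log (log x)) atTop
      (𝓝 C) := by
  obtain ⟨C, hC⟩ := exists_tendsto_sum_primesLE_neg_log_sub_log_log
  refine ⟨C, ?_⟩
  simpa using (hC.comp tendsto_nat_floor_atTop).add tendsto_log_log_floor_sub_log_log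

section AbelianTheorem

variable {ι κ : Type*} {a l : ι → ℝ} {b m : κ → ℝ} {δ u L : ℝ}

/-- The summatory function `∑_{l i ≤ u} a i` of the general Dirichlet series
`∑ i, a i * exp (-(δ * l i))`. The `tsum` makes it `0` where the restricted family is not
summable. -/
noncomputable def summatory (a l : ι → ℝ) (u : ℝ) : ℝ := ∑' i, {i | l i ≤ u}.indicator a i

theorem summatory_eq_sum {s : Finset ι} (hs : ∀ i, l i ≤ u ↔ i ∈ s) :
    summatory a l u = ∑ i ∈ s, a i := by
  have : {i | l i ≤ u} = s := Set.ext hs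
  rw [summatory, this, sum_eq_tsum_indicator]

theorem summable_indicator_of_summable_mul_exp (hδ : 0 ≤ δ)
    (h : Summable fun i ↦ a i * exp (-(δ * l i))) (u : ℝ) :
    Summable ({i | l i ≤ u}.indicator a) := by
  refine (h.norm.mul_left (exp (δ * u))).of_norm_bounded fun i ↦ ?_
  rw [Set.indicator_apply]
  split_ifs with hi
  · rw [norm_mul, norm_of_nonneg (exp_pos _).le, mul_left_comm, ← exp_add]
    refine le_mul_of_one_le_right (norm_nonneg _) (one_le_exp ?_)
    rw [← sub_eq_add_neg, ← mul_sub]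
    exact mul_nonneg hδ (sub_nonneg.2 hi)
  · rw [norm_zero]
    positivity

theorem measurable_summatory [Countable ι] : Measurable (summatory a l) :=
  Measurable.tsum fun i ↦ (measurable_const (a := a i)).indicator (measurableSet_Ici (a := l i))

theorem exists_abs_summatory_le (h : ∀ u, Summable ({i | l i ≤ u}.indicator a))
    (hL : Tendsto (summatory a l) atTop (𝓝 L)) : ∃ K, ∀ u, |summatory a l u| ≤ K := by
  obtain ⟨U, hU⟩ := eventually_atTop.1 (hL.abs.eventually_le_const (lt_add_one |L|))
  refine ⟨max (|L| + 1) (∑' i, |{i | l i ≤ U}.indicator a i|), fun u ↦ ?_⟩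
  rcases le_total U u with hu | hu
  · exact le_max_of_le_left (hU u hu)
  refine le_max_of_le_right <| (norm_tsum_le_tsum_norm (h u).norm).trans <|
    (h u).norm.tsum_le_tsum (fun i ↦ ?_) (h U).norm
  exact norm_indicator_le_of_subset (fun i (hi : l i ≤ u) ↦ hi.trans hu) a i

theorem integrableOn_Ioi_indicator_Ici_exp_neg (c : ℝ) :
    IntegrableOn ((Set.Ici c).indicator fun v ↦ exp (-v)) (Set.Ioi 0) :=
  (integrableOn_exp_neg_Ioi 0).indicator measurableSet_Ici

theorem integral_Ioi_indicator_Ici_exp_neg {c : ℝ} (hc : 0 ≤ c) :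
    ∫ v in Set.Ioi 0, (Set.Ici c).indicator (fun v ↦ exp (-v)) v = exp (-c) := by
  rw [integral_indicator measurableSet_Ici, Measure.restrict_restrict measurableSet_Ici,
    ← setIntegral_congr_set (Ioi_ae_eq_Ici.inter (ae_eq_refl (Set.Ioi 0))), Set.Ioi_inter_Ioi,
    sup_of_le_left hc, integral_exp_neg_Ioi]

theorem tsum_mul_exp_eq_integral_summatory [Countable ι] (hl : ∀ i, 0 ≤ l i) (hδ : 0 < δ)
    (h : Summable fun i ↦ a i * exp (-(δ * l i))) :
    ∑' i, a i * exp (-(δ * l i)) = ∫ v in Set.Ioi 0, exp (-v) * summatory a l (v / δ) := by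
  let F (i : ι) (v : ℝ) : ℝ := a i * (Set.Ici (δ * l i)).indicator (fun v ↦ exp (-v)) v
  have hδl (i : ι) : 0 ≤ δ * l i := mul_nonneg hδ.le (hl i)
  have hF (i : ι) : ∫ v in Set.Ioi 0, F i v = a i * exp (-(δ * l i)) := by
    rw [integral_const_mul, integral_Ioi_indicator_Ici_exp_neg (hδl i)]
  have hnorm (i : ι) : ∫ v in Set.Ioi 0, ‖F i v‖ = ‖a i * exp (-(δ * l i))‖ := by
    simp_rw [F, norm_mul, norm_indicator_eq_indicator_norm, norm_of_nonneg (exp_pos _).le]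
    rw [integral_const_mul, integral_Ioi_indicator_Ici_exp_neg (hδl i)]
  have hsum (v : ℝ) : ∑' i, F i v = exp (-v) * summatory a l (v / δ) := by
    rw [summatory, ← tsum_mul_left]
    refine tsum_congr fun i ↦ ?_
    simp only [F, Set.indicator_apply, Set.mem_Ici, Set.mem_ofPred_eq, le_div_iff₀' hδ]
    split_ifs <;> ring
  simp_rw [← hF, ← hsum]
  exact integral_tsum_of_summable_integral_norm
    (fun i ↦ (integrableOn_Ioi_indicator_Ici_exp_neg _).const_mul _)
    (by simpa only [hnorm] using h.norm)

theorem tendsto_integral_exp_neg_mul_comp_div {E : ℝ → ℝ} {K : ℝ} (hmeas : Measurable E)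
    (hK : ∀ u, |E u| ≤ K) (hL : Tendsto E atTop (𝓝 L)) :
    Tendsto (fun δ ↦ ∫ v in Set.Ioi 0, exp (-v) * E (v / δ)) (𝓝[>] 0) (𝓝 L) := by
  have hlim : ∫ v in Set.Ioi 0, exp (-v) * L = L := by
    rw [integral_mul_const, integral_exp_neg_Ioi_zero, one_mul]
  rw [← hlim]
  refine tendsto_integral_filter_of_dominated_convergence (fun v ↦ exp (-v) * K)
    (.of_forall fun δ ↦ by fun_prop) (.of_forall fun δ ↦ .of_forall fun v ↦ ?_)
    ((integrableOn_exp_neg_Ioi 0).mul_const K) ?_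
  · rw [norm_mul, norm_of_nonneg (exp_pos _).le]
    gcongr
    exact hK _
  · filter_upwards [ae_restrict_mem measurableSet_Ioi] with v hv
    exact (hL.comp (tendsto_inv_nhdsGT_zero.const_mul_atTop hv)).const_mul _

theorem tendsto_tsum_mul_exp_of_tendsto_summatory [Countable ι] (hl : ∀ i, 0 ≤ l i)
    (h : ∀ δ > 0, Summable fun i ↦ a i * exp (-(δ * l i)))
    (hL : Tendsto (summatory a l) atTop (𝓝 L)) :
    Tendsto (fun δ ↦ ∑' i, a i * exp (-(δ * l i))) (𝓝[>] 0) (𝓝 L) := by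
  have hind := summable_indicator_of_summable_mul_exp zero_le_one (h 1 one_pos)
  obtain ⟨K, hK⟩ := exists_abs_summatory_le hind hL
  refine (tendsto_integral_exp_neg_mul_comp_div measurable_summatory hK hL).congr' ?_
  filter_upwards [self_mem_nhdsWithin] with δ hδ
  exact (tsum_mul_exp_eq_integral_summatory hl hδ (h δ hδ)).symm

theorem tendsto_tsum_sub_tsum_of_tendsto_summatory_sub [Countable ι] [Countable κ]
    (hl : ∀ i, 0 ≤ l i) (hm : ∀ j, 0 ≤ m j)
    (ha : ∀ δ > 0, Summable fun i ↦ a i * exp (-(δ * l i)))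
    (hb : ∀ δ > 0, Summable fun j ↦ b j * exp (-(δ * m j)))
    (hL : Tendsto (fun u ↦ summatory a l u - summatory b m u) atTop (𝓝 L)) :
    Tendsto (fun δ ↦ ∑' i, a i * exp (-(δ * l i)) - ∑' j, b j * exp (-(δ * m j))) (𝓝[>] 0)
      (𝓝 L) := by
  let c : ι ⊕ κ → ℝ := Sum.elim a (-b)
  let n : ι ⊕ κ → ℝ := Sum.elim l m
  have hexp {δ : ℝ} (hδ : 0 < δ) : HasSum (fun i ↦ c i * exp (-(δ * n i)))
      (∑' i, a i * exp (-(δ * l i)) - ∑' j, b j * exp (-(δ * m j))) := by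
    rw [sub_eq_add_neg]
    exact .sum (ha δ hδ).hasSum ((hb δ hδ).hasSum.neg.congr_fun fun j ↦ neg_mul _ _)
  have hc (u : ℝ) : summatory c n u = summatory a l u - summatory b m u := by
    have ha' := summable_indicator_of_summable_mul_exp zero_le_one (ha 1 one_pos) u
    have hb' := summable_indicator_of_summable_mul_exp zero_le_one (hb 1 one_pos) u
    rw [sub_eq_add_neg]
    refine (HasSum.sum (f := {i | n i ≤ u}.indicator c) ha'.hasSum
      (hb'.hasSum.neg.congr_fun fun j ↦ ?_)).tsum_eq
    exact congrFun (Set.indicator_neg {j | m j ≤ u} b) j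
  refine (tendsto_tsum_mul_exp_of_tendsto_summatory (a := c) (l := n)
    (Sum.rec hl hm) (fun δ hδ ↦ (hexp hδ).summable)
    (hL.congr fun u ↦ (hc u).symm)).congr' ?_
  filter_upwards [self_mem_nhdsWithin] with δ hδ using (hexp hδ).tsum_eq

end AbelianTheorem

theorem hasSum_primes_neg_log_one_sub {f : ℕ →*₀ ℝ} (hf : ∀ n, 0 ≤ f n) (hsum : Summable f) :
    HasSum (fun p : Nat.Primes ↦ -log (1 - f p)) (log (∑' n, f n)) := by
  have hlt (p : Nat.Primes) : 0 < 1 - f p := by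
    have := hsum.norm_lt_one (f := f.toMonoidHom) p.prop.one_lt
    exact sub_pos.2 ((le_abs_self (f p)).trans_lt this)
  have hpos : 0 < ∑' n, f n := hsum.tsum_pos hf 1 (by simp)
  refine ((EulerProduct.eulerProduct_completely_multiplicative_hasProd hsum.norm).log
    hpos.ne').congr fun s ↦ ?_
  rw [log_prod fun p _ ↦ (inv_pos.2 (hlt p)).ne']
  simp only [log_inv]

/-- The completely multiplicative function `n ↦ n ^ (-s)` summed by `ζ s`. The value at `n = 0`
is `0` only because `0 ^ s = 0`, hence the condition on `s`. -/
noncomputable def rpowInvHom {s : ℝ} (hs : s ≠ 0) : ℕ →*₀ ℝ where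
  toFun n := ((n : ℝ) ^ s)⁻¹
  map_zero' := by simp [zero_rpow hs]
  map_one' := by simp
  map_mul' m n := by
    rw [Nat.cast_mul, mul_rpow m.cast_nonneg n.cast_nonneg, mul_inv]

theorem hasSum_primes_neg_log_one_sub_rpow_inv {s : ℝ} (hs : 1 < s) :
    HasSum (fun p : Nat.Primes ↦ -log (1 - ((p : ℝ) ^ s)⁻¹)) (log (∑' n : ℕ, ((n : ℝ) ^ s)⁻¹)) :=
  hasSum_primes_neg_log_one_sub (f := rpowInvHom (zero_lt_one.trans hs).ne')
    (fun n ↦ inv_nonneg.2 (by positivity)) (summable_nat_rpow_inv.2 hs)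

theorem abs_neg_log_one_sub_mul_sub_le {q t : ℝ} (hq₀ : 0 ≤ q) (hq : q ≤ 1 / 2) (ht₀ : 0 ≤ t)
    (ht : t ≤ 1) : |-log (1 - q) * t - -log (1 - q * t)| ≤ 4 * q ^ 2 := by
  have hqt : q * t ≤ q := mul_le_of_le_one_right hq₀ ht
  calc _ = |(-log (1 - q) - q) * t - (-log (1 - q * t) - q * t)| := by ring_nf
    _ ≤ |-log (1 - q) - q| * |t| + |-log (1 - q * t) - q * t| := by
      rw [← abs_mul]
      exact abs_sub _ _
    _ ≤ 2 * q ^ 2 * 1 + 2 * q ^ 2 := by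
      gcongr
      · exact abs_neg_log_one_sub_sub_self_le hq
      · rwa [abs_of_nonneg ht₀]
      · exact (abs_neg_log_one_sub_sub_self_le (hqt.trans hq)).trans (by gcongr)
    _ = 4 * q ^ 2 := by ring

theorem inv_mul_exp_neg_mul_log {x : ℝ} (hx : 0 < x) (δ : ℝ) :
    x⁻¹ * exp (-(δ * log x)) = (x ^ (1 + δ))⁻¹ := by
  rw [rpow_add hx, rpow_one, rpow_def_of_pos hx, mul_inv, ← exp_neg, mul_comm δ]

/-- The error made when the logarithm `-log (1 - p⁻¹ * p ^ (-δ))` of the Euler factor of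
`ζ (1 + δ)` at `p` is replaced by `-log (1 - p⁻¹) * p ^ (-δ)`, the term of a Dirichlet series whose
coefficients do not depend on `δ`. -/
noncomputable def eulerFactorError (δ : ℝ) (p : Nat.Primes) : ℝ :=
  -log (1 - (p : ℝ)⁻¹) * exp (-(δ * log p)) - -log (1 - (p : ℝ)⁻¹ * exp (-(δ * log p)))

theorem abs_eulerFactorError_le {δ : ℝ} (hδ : 0 ≤ δ) (p : Nat.Primes) :
    |eulerFactorError δ p| ≤ 4 * (p : ℝ)⁻¹ ^ 2 :=
  abs_neg_log_one_sub_mul_sub_le (by positivity) (primes_inv_le_half p) (exp_pos _).le <|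
    exp_le_one_iff.2 <| neg_nonpos.2 <| mul_nonneg hδ (log_natCast_nonneg _)

theorem tendsto_tsum_eulerFactorError :
    Tendsto (fun δ ↦ ∑' p, eulerFactorError δ p) (𝓝[>] 0) (𝓝 0) := by
  suffices Tendsto (fun δ ↦ ∑' p, eulerFactorError δ p) (𝓝[>] 0) (𝓝 (∑' _ : Nat.Primes, 0)) by
    rwa [tsum_zero] at this
  refine tendsto_tsum_of_dominated_convergence (summable_inv_sq_primes.mul_left 4) (fun p ↦ ?_) ?_
  · have hne : 1 - (p : ℝ)⁻¹ * exp (-(0 * log p)) ≠ 0 := by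
      have := primes_inv_le_half p
      rw [zero_mul, neg_zero, exp_zero]
      linarith
    have hcont : ContinuousAt (eulerFactorError · p) 0 := by
      unfold eulerFactorError
      fun_prop (disch := assumption)
    simpa [eulerFactorError] using hcont.tendsto.mono_left nhdsWithin_le_nhds
  · filter_upwards [self_mem_nhdsWithin] with δ hδ using abs_eulerFactorError_le (le_of_lt hδ)

theorem hasSum_primes_neg_log_mul_exp {δ : ℝ} (hδ : 0 < δ) :
    HasSum (fun p : Nat.Primes ↦ -log (1 - (p : ℝ)⁻¹) * exp (-(δ * log p)))
      (log (∑' n : ℕ, ((n : ℝ) ^ (1 + δ))⁻¹) + ∑' p, eulerFactorError δ p) := by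
  have herr : Summable (eulerFactorError δ) :=
    (summable_inv_sq_primes.mul_left 4).of_norm_bounded (abs_eulerFactorError_le hδ.le)
  refine ((hasSum_primes_neg_log_one_sub_rpow_inv (lt_add_of_pos_right 1 hδ)).add
    herr.hasSum).congr_fun fun p ↦ ?_
  rw [eulerFactorError, inv_mul_exp_neg_mul_log (mod_cast p.prop.pos), add_sub_cancel]

theorem tendsto_log_tsum_rpow_inv_add_log :
    Tendsto (fun δ ↦ log (∑' n : ℕ, ((n : ℝ) ^ (1 + δ))⁻¹) + log δ) (𝓝[>] 0) (𝓝 0) := by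
  have hshift : Tendsto (fun δ : ℝ ↦ 1 + δ) (𝓝[>] 0) (𝓝[>] 1) := by
    have hcont : ContinuousAt (fun δ : ℝ ↦ 1 + δ) 0 := by fun_prop
    refine tendsto_nhdsWithin_iff.2 ⟨?_, ?_⟩
    · simpa using hcont.tendsto.mono_left nhdsWithin_le_nhds
    · filter_upwards [self_mem_nhdsWithin] with δ hδ using lt_add_of_pos_right 1 (Set.mem_Ioi.1 hδ)
  have hlim := (tendsto_sub_mul_tsum_nat_rpow.comp hshift).log one_ne_zero
  rw [log_one] at hlim
  refine hlim.congr' ?_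
  filter_upwards [self_mem_nhdsWithin] with δ hδ
  have hδ : 0 < δ := hδ
  have hpos : 0 < ∑' n : ℕ, ((n : ℝ) ^ (1 + δ))⁻¹ :=
    (summable_nat_rpow_inv.2 (lt_add_of_pos_right 1 hδ)).tsum_pos (fun n ↦ by positivity) 1
      (by simp)
  simp only [Function.comp_apply, add_sub_cancel_left, one_div]
  rw [log_mul hδ.ne' hpos.ne', add_comm]

theorem tendsto_tsum_primes_neg_log_mul_exp_add_log :
    Tendsto (fun δ ↦ ∑' p : Nat.Primes, -log (1 - (p : ℝ)⁻¹) * exp (-(δ * log p)) + log δ)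
      (𝓝[>] 0) (𝓝 0) := by
  have := tendsto_log_tsum_rpow_inv_add_log.add tendsto_tsum_eulerFactorError
  rw [add_zero] at this
  refine this.congr' ?_
  filter_upwards [self_mem_nhdsWithin] with δ hδ
  rw [(hasSum_primes_neg_log_mul_exp hδ).tsum_eq]
  ring

theorem hasSum_inv_mul_exp_neg {δ : ℝ} (hδ : 0 < δ) :
    HasSum (fun n : ℕ ↦ (n : ℝ)⁻¹ * exp (-(δ * n))) (-log (1 - exp (-δ))) := by
  have hlt : |exp (-δ)| < 1 := by rwa [abs_exp, exp_lt_one_iff, neg_lt_zero]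
  rw [← hasSum_nat_add_iff' 1, sum_range_one, Nat.cast_zero, inv_zero, zero_mul, sub_zero]
  refine (hasSum_pow_div_log_of_abs_lt_one hlt).congr_fun fun n ↦ ?_
  rw [← exp_nat_mul, div_eq_inv_mul, mul_neg, mul_comm δ, Nat.cast_add_one]

theorem tendsto_log_one_sub_exp_neg_sub_log :
    Tendsto (fun δ ↦ log (1 - exp (-δ)) - log δ) (𝓝[>] 0) (𝓝 0) := by
  have hderiv : HasDerivAt (fun δ : ℝ ↦ 1 - exp (-δ)) 1 0 := by
    simpa using ((hasDerivAt_neg (0 : ℝ)).exp).const_sub 1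
  have hequiv : (fun δ : ℝ ↦ 1 - exp (-δ)) ~[𝓝[>] 0] id := by
    refine IsLittleO.mono ?_ nhdsWithin_le_nhds
    simpa using! hasDerivAt_iff_isLittleO.1 hderiv
  refine tendsto_log_sub_log_of_isEquivalent hequiv ?_ ?_ <;>
    filter_upwards [self_mem_nhdsWithin] with δ hδ
  · exact (sub_pos.2 (exp_lt_one_iff.2 (neg_lt_zero.2 hδ))).ne'
  · exact ne_of_gt hδ

theorem summatory_inv_natCast {u : ℝ} (hu : 0 ≤ u) :
    summatory (fun n : ℕ ↦ (n : ℝ)⁻¹) (fun n ↦ n) u = harmonic ⌊u⌋₊ := by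
  rw [summatory_eq_sum (s := range (⌊u⌋₊ + 1)) fun n ↦ by
    rw [← Nat.le_floor_iff hu, Finset.mem_range_succ_iff], sum_range_succ']
  simp [harmonic]

theorem summatory_primes_log (f : ℕ → ℝ) (u : ℝ) :
    summatory (fun p : Nat.Primes ↦ f p) (fun p ↦ log p) u =
      ∑ p ∈ Nat.primesLE ⌊exp u⌋₊, f p := by
  have hmem (p : Nat.Primes) : log p ≤ u ↔ p ∈ (Nat.primesLE ⌊exp u⌋₊).subtype Nat.Prime := by
    have hpos : (0 : ℝ) < p := mod_cast p.prop.pos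
    rw [log_le_iff_le_exp hpos, ← Nat.le_floor_iff (exp_pos u).le]
    exact ((mem_subtype (a := p)).trans <| Nat.mem_primesLE.trans <| and_iff_left p.prop).symm
  exact (summatory_eq_sum hmem).trans (sum_subtype_of_mem f fun _ ↦ Nat.prime_of_mem_primesLE)

theorem eq_eulerMascheroniConstant_of_tendsto {C : ℝ}
    (hC : Tendsto (fun x : ℝ ↦ ∑ p ∈ Nat.primesLE ⌊x⌋₊, -log (1 - (p : ℝ)⁻¹) - log (log x)) atTop
      (𝓝 C)) : C = eulerMascheroniConstant := by
  have hharm : Tendsto (fun u : ℝ ↦ (harmonic ⌊u⌋₊ : ℝ) - log u) atTop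
      (𝓝 eulerMascheroniConstant) := by
    simpa using
      (tendsto_harmonic_sub_log.comp tendsto_nat_floor_atTop).add tendsto_log_floor_sub_log
  have hsummatory : Tendsto (fun u ↦
      summatory (fun p : Nat.Primes ↦ -log (1 - (p : ℝ)⁻¹)) (fun p ↦ log p) u -
        summatory (fun n : ℕ ↦ (n : ℝ)⁻¹) (fun n ↦ n) u) atTop
      (𝓝 (C - eulerMascheroniConstant)) := by
    refine ((hC.comp tendsto_exp_atTop).sub hharm).congr' ?_
    filter_upwards [eventually_ge_atTop 0] with u hu
    rw [summatory_primes_log (fun p ↦ -log (1 - (p : ℝ)⁻¹)), summatory_inv_natCast hu]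
    simp
  have hseries := tendsto_tsum_sub_tsum_of_tendsto_summatory_sub
    (fun p : Nat.Primes ↦ log_natCast_nonneg p) (fun n ↦ n.cast_nonneg)
    (fun δ hδ ↦ (hasSum_primes_neg_log_mul_exp hδ).summable)
    (fun δ hδ ↦ (hasSum_inv_mul_exp_neg hδ).summable) hsummatory
  have hzero := tendsto_tsum_primes_neg_log_mul_exp_add_log.add tendsto_log_one_sub_exp_neg_sub_log
  rw [add_zero] at hzero
  refine sub_eq_zero.1 (tendsto_nhds_unique (hseries.congr' ?_) hzero)
  filter_upwards [self_mem_nhdsWithin] with δ hδ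
  rw [(hasSum_inv_mul_exp_neg hδ).tsum_eq]
  ring

theorem exp_neg_sum_neg_log_sub_log_log {x : ℝ} (hx : 1 < x) (N : ℕ) :
    exp (-(∑ p ∈ Nat.primesLE N, -log (1 - (p : ℝ)⁻¹) - log (log x))) =
      log x * ∏ p ∈ Nat.primesLE N, (1 - (p : ℝ)⁻¹) := by
  have hpos : ∀ p ∈ Nat.primesLE N, 0 < 1 - (p : ℝ)⁻¹ := fun p hp ↦ sub_pos.2 <|
    inv_lt_one_of_one_lt₀ (mod_cast (Nat.prime_of_mem_primesLE hp).one_lt)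
  rw [sum_neg_distrib, neg_sub_left, neg_neg, exp_add, exp_log (log_pos hx), exp_sum]
  exact congrArg _ (prod_congr rfl fun p hp ↦ exp_log (hpos p hp))

/-- Mertens' theorem: `Π_{p ≤ x} (1 - 1/p) ∼ e^{-γ} / log x`, i.e.
`log x · Π_{p ≤ x} (1 - 1/p) → e^{-γ}` as `x → ∞`. -/
theorem mertens_product :
    Filter.Tendsto
      (fun x : ℝ => Real.log x *
        ∏ p ∈ (Finset.range (⌊x⌋₊ + 1)).filter Nat.Prime, (1 - 1 / (p : ℝ)))
      Filter.atTop (nhds (Real.exp (-Real.eulerMascheroniConstant))) := by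
  obtain ⟨C, hC⟩ := exists_tendsto_sum_primesLE_floor_neg_log_sub_log_log
  obtain rfl := eq_eulerMascheroniConstant_of_tendsto hC
  simp only [← Nat.primesLE_eq_filter_range, one_div]
  refine hC.neg.rexp.congr' ?_
  filter_upwards [eventually_gt_atTop 1] with x hx using exp_neg_sum_neg_log_sub_log_log hx _
end

section
/- Let k be a nonzero integer divisible by 4, let p be a prime with p ≡ 1 (mod 4), write p = a² + b² with a, b ∈ ℤ and set θ_p = arg(a + ib). Then for every l ≥ 1, |S(p^l, k)| = 4·| Σ_{j=0}^{l} exp(i·k·(l − 2j)·θ_p) |. In particular |S(p,k)| = 8·|cos(k·θ_p)| and |S(p^l,k)| ≤ 4·(l+1). -/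
/-!
Identify `u = (x, y)` with the Gaussian integer `z = x + iy`. Then `exp (i k θ_u) = (z / |z|) ^ k`
is completely multiplicative in `z`, and it is trivial on the four units because `4 ∣ k`. If
`q = a + ib` has prime norm `p ≡ 1 (mod 4)`, then `q` and `star q` are non-associated primes, so by
unique factorization the elements of norm `p ^ l` are exactly the products `ζ q ^ i (star q) ^ j`
with `ζ ^ 4 = 1` and `i + j = l`, without repetition. Such a product contributes
`exp (i k (i - j) θ_p)`.
-/

open Finset.HasAntidiagonal (antidiagonal mem_antidiagonal)

section PrimeFactors

variable {M : Type*} [CommMonoidWithZero M] [IsCancelMulZero M] {q r : M}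

theorem exists_associated_pow_mul_pow [DecompositionMonoid M] (hq : Prime q) (hr : Prime r)
    {m n : ℕ} {z : M} (hz : z ∣ q ^ m * r ^ n) :
    ∃ i ≤ m, ∃ j ≤ n, Associated z (q ^ i * r ^ j) := by
  obtain ⟨x, y, hx, hy, rfl⟩ := exists_dvd_and_dvd_of_dvd_mul hz
  obtain ⟨i, hi, hxi⟩ := (dvd_prime_pow hq m).1 hx
  obtain ⟨j, hj, hyj⟩ := (dvd_prime_pow hr n).1 hy
  exact ⟨i, hi, j, hj, hxi.mul_mul hyj⟩

theorem emultiplicity_pow_mul_pow (hq : Prime q) (hqr : ¬ q ∣ r) (i j : ℕ) :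
    emultiplicity q (q ^ i * r ^ j) = i := by
  rw [emultiplicity_mul hq, emultiplicity_pow_self_of_prime hq,
    emultiplicity_eq_zero.2 fun h => hqr (hq.dvd_of_dvd_pow h), add_zero]

end PrimeFactors

section QuadraticRing

variable {d : ℤ} {q : ℤ√d}

theorem irreducible_of_irreducible_norm (hq : Irreducible q.norm) : Irreducible q :=
  have : IsLocalHom (Zsqrtd.normMonoidHom (d := d)) :=
    ⟨fun z => (Zsqrtd.isUnit_iff_norm_isUnit z).2⟩
  Irreducible.of_map (f := Zsqrtd.normMonoidHom) hq

theorem norm_pow_mul_star_pow (i j : ℕ) : (q ^ i * star q ^ j).norm = q.norm ^ (i + j) := by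
  have norm_pow (z : ℤ√d) (n : ℕ) : (z ^ n).norm = z.norm ^ n :=
    map_pow Zsqrtd.normMonoidHom z n
  rw [Zsqrtd.norm_mul, norm_pow, norm_pow, Zsqrtd.norm_conj, pow_add]

theorem norm_dvd_sq_of_dvd_intCast {n : ℤ} (h : q ∣ n) : q.norm ∣ n ^ 2 := by
  obtain ⟨w, hw⟩ := h
  exact ⟨w.norm, by rw [← Zsqrtd.norm_mul, ← hw, Zsqrtd.norm_intCast, sq]⟩

theorem not_dvd_star_of_prime_norm (hq : Prime q.norm) (h2d : ¬ q.norm ∣ 2 * d) :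
    ¬ q ∣ star q := by
  intro h
  have trace_eq : ((2 * q.re : ℤ) : ℤ√d) = q + star q := by
    ext <;> simp; ring
  have dvd_two_mul_re : q.norm ∣ 2 * q.re :=
    hq.dvd_of_dvd_pow <| norm_dvd_sq_of_dvd_intCast <| trace_eq ▸ dvd_add dvd_rfl h
  have dvd_re : q.norm ∣ q.re :=
    (hq.dvd_or_dvd dvd_two_mul_re).resolve_left fun h2 => h2d (h2.mul_right d)
  have dvd_mul_im_sq : q.norm ∣ d * q.im ^ 2 := by
    rw [show d * q.im ^ 2 = q.re * q.re - q.norm by rw [Zsqrtd.norm_def]; ring]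
    exact dvd_sub (dvd_re.mul_right _) dvd_rfl
  have dvd_im : q.norm ∣ q.im :=
    hq.dvd_of_dvd_pow <| (hq.dvd_or_dvd dvd_mul_im_sq).resolve_left fun hd => h2d (hd.mul_left 2)
  have sq_dvd : q.norm * q.norm ∣ q.norm * 1 := by
    conv_rhs => rw [mul_one, Zsqrtd.norm_def, mul_assoc]
    exact dvd_sub (mul_dvd_mul dvd_re dvd_re) ((mul_dvd_mul dvd_im dvd_im).mul_left d)
  exact hq.not_isUnit (isUnit_of_dvd_one ((mul_dvd_mul_iff_left hq.ne_zero).1 sq_dvd))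

end QuadraticRing

section GaussianInteger

theorem isUnit_gaussianInt_iff_pow_four_eq_one {z : GaussianInt} : IsUnit z ↔ z ^ 4 = 1 := by
  refine ⟨fun hz => ?_, fun hz => .of_pow_eq_one hz four_ne_zero⟩
  obtain ⟨x, y⟩ := z
  have hxy : x ^ 2 + y ^ 2 = 1 := by
    have := (Zsqrtd.norm_eq_one_iff' (by norm_num) _).2 hz
    rw [Zsqrtd.norm_def] at this
    linarith
  obtain ⟨hx₁, hx₂⟩ : -1 ≤ x ∧ x ≤ 1 := by constructor <;> nlinarith [sq_nonneg y]
  obtain ⟨hy₁, hy₂⟩ : -1 ≤ y ∧ y ≤ 1 := by constructor <;> nlinarith [sq_nonneg x]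
  interval_cases x <;> interval_cases y <;> first | decide | norm_num at hxy

theorem isPrimitiveRoot_sqrtd_neg_one : IsPrimitiveRoot (Zsqrtd.sqrtd : GaussianInt) 4 :=
  .mk_of_lt _ (by norm_num) (by decide) fun n hn₀ hn₄ => by interval_cases n <;> decide

theorem card_nthRootsFinset_four_gaussianInt :
    (Polynomial.nthRootsFinset 4 (1 : GaussianInt)).card = 4 :=
  isPrimitiveRoot_sqrtd_neg_one.card_nthRootsFinset

variable {q : GaussianInt}

theorem prime_of_prime_gaussianInt_norm (hq : Prime q.norm) : Prime q :=
  (irreducible_of_irreducible_norm hq.irreducible).prime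

theorem norm_eq_pow_iff_exists_associated (hq : Prime q.norm) {l : ℕ} {z : GaussianInt} :
    z.norm = q.norm ^ l ↔
      ∃ x ∈ antidiagonal l, Associated z (q ^ x.1 * star q ^ x.2) := by
  constructor
  · intro hz
    have hdvd : z ∣ q ^ l * star q ^ l := by
      rw [← mul_pow, ← Zsqrtd.norm_eq_mul_conj, ← Int.cast_pow, ← hz, Zsqrtd.norm_eq_mul_conj]
      exact dvd_mul_right z (star z)
    have hstar : Prime (star q).norm := by rwa [Zsqrtd.norm_conj]
    obtain ⟨i, -, j, -, hij⟩ := exists_associated_pow_mul_pow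
      (prime_of_prime_gaussianInt_norm hq) (prime_of_prime_gaussianInt_norm hstar) hdvd
    have hnorm : q.norm ^ (i + j) = q.norm ^ l := by
      rw [← hz, Zsqrtd.norm_eq_of_associated (by norm_num) hij, norm_pow_mul_star_pow]
    have hsum : i + j = l :=
      Int.pow_right_injective (Int.prime_iff_natAbs_prime.1 hq).two_le hnorm
    exact ⟨(i, j), mem_antidiagonal.2 hsum, hij⟩
  · rintro ⟨x, hx, hzx⟩
    rw [Zsqrtd.norm_eq_of_associated (by norm_num) hzx, norm_pow_mul_star_pow,
      mem_antidiagonal.1 hx]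

theorem injOn_mul_pow_mul_star_pow (hq : Prime q.norm) (h2 : ¬ q.norm ∣ 2) (l : ℕ) :
    Set.InjOn (fun x : GaussianInt × ℕ × ℕ => x.1 * (q ^ x.2.1 * star q ^ x.2.2))
      (Polynomial.nthRootsFinset 4 (1 : GaussianInt) ×ˢ antidiagonal l :
        Finset (GaussianInt × ℕ × ℕ)) := by
  have hqp : Prime q := prime_of_prime_gaussianInt_norm hq
  have hndvd : ¬ q ∣ star q := not_dvd_star_of_prime_norm hq (by simpa using h2)
  have hstar : star q ≠ 0 := star_ne_zero.2 hqp.ne_zero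
  have emultiplicity_eq {ζ : GaussianInt} (hζ : IsUnit ζ) (i j : ℕ) :
      emultiplicity q (ζ * (q ^ i * star q ^ j)) = i := by
    rw [emultiplicity_mul hqp, emultiplicity_of_isUnit_right hqp.not_isUnit hζ, zero_add,
      emultiplicity_pow_mul_pow hqp hndvd]
  rintro ⟨ζ, i, j⟩ hx ⟨ξ, i', j'⟩ hy hxy
  simp only [Finset.coe_product, Set.mem_prod, Finset.mem_coe, mem_antidiagonal,
    Polynomial.mem_nthRootsFinset four_pos, ← isUnit_gaussianInt_iff_pow_four_eq_one] at hx hy hxy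
  have hi : i = i' := by
    have := congrArg (emultiplicity q) hxy
    rw [emultiplicity_eq hx.1, emultiplicity_eq hy.1] at this
    exact_mod_cast this
  have hj : j = j' := by lia
  subst hi hj
  have hζ : ζ = ξ :=
    mul_right_cancel₀ (mul_ne_zero (pow_ne_zero _ hqp.ne_zero) (pow_ne_zero _ hstar)) hxy
  rw [hζ]

end GaussianInteger

section LatticeCircle

theorem mem_latticeCircle_iff_norm_eq {n : ℕ} {z : GaussianInt} :
    (z.re, z.im) ∈ latticeCircle n ↔ z.norm = n := by
  have norm_eq : z.norm = z.re ^ 2 + z.im ^ 2 := by rw [Zsqrtd.norm_def]; ring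
  rw [latticeCircle, Finset.mem_filter, norm_eq, and_iff_right_iff_imp]
  intro h
  have abs_re_le : |z.re| ≤ n := by
    linarith [Int.le_self_sq |z.re|, sq_abs z.re, sq_nonneg z.im]
  have abs_im_le : |z.im| ≤ n := by
    linarith [Int.le_self_sq |z.im|, sq_abs z.im, sq_nonneg z.re]
  simpa only [Finset.mem_product, Finset.mem_Icc] using ⟨abs_le.1 abs_re_le, abs_le.1 abs_im_le⟩

theorem sum_latticeCircle_prime_pow {A : Type*} [AddCommMonoid A] (f : GaussianInt → A) {p : ℕ}
    (hp : p.Prime) (hp2 : p ≠ 2) {q : GaussianInt} (hq : q.norm = p) (l : ℕ) :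
    ∑ u ∈ latticeCircle (p ^ l), f ⟨u.1, u.2⟩ =
      ∑ ζ ∈ Polynomial.nthRootsFinset 4 (1 : GaussianInt), ∑ x ∈ antidiagonal l,
        f (ζ * (q ^ x.1 * star q ^ x.2)) := by
  have hqp : Prime q.norm := hq ▸ Nat.prime_iff_prime_int.1 hp
  have hq2 : ¬ q.norm ∣ 2 := by
    rw [hq]
    exact_mod_cast mt (Nat.prime_dvd_prime_iff_eq hp Nat.prime_two).1 hp2
  have mem_iff (z : GaussianInt) : (z.re, z.im) ∈ latticeCircle (p ^ l) ↔
      ∃ x ∈ antidiagonal l, Associated (q ^ x.1 * star q ^ x.2) z := by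
    rw [mem_latticeCircle_iff_norm_eq, Nat.cast_pow, ← hq, norm_eq_pow_iff_exists_associated hqp]
    simp only [Associated.comm]
  rw [← Finset.sum_product']
  symm
  refine Finset.sum_nbij (fun x => ((x.1 * (q ^ x.2.1 * star q ^ x.2.2)).re,
    (x.1 * (q ^ x.2.1 * star q ^ x.2.2)).im)) ?_ ?_ ?_ fun _ _ => rfl
  · rintro ⟨ζ, x⟩ hx
    rw [Finset.mem_product, Polynomial.mem_nthRootsFinset four_pos,
      ← isUnit_gaussianInt_iff_pow_four_eq_one] at hx
    exact (mem_iff _).2 ⟨x, hx.2, (associated_isUnit_mul_right_iff hx.1).2 .rfl⟩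
  · intro x hx y hy hxy
    exact injOn_mul_pow_mul_star_pow hqp hq2 l hx hy
      (Zsqrtd.ext (congrArg Prod.fst hxy) (congrArg Prod.snd hxy))
  · intro u hu
    obtain ⟨x, hx, ζ, hζ⟩ := (mem_iff ⟨u.1, u.2⟩).1 hu
    refine ⟨(ζ, x), ?_, ?_⟩
    · rw [Finset.mem_coe, Finset.mem_product, Polynomial.mem_nthRootsFinset four_pos,
        ← isUnit_gaussianInt_iff_pow_four_eq_one]
      exact ⟨ζ.isUnit, hx⟩
    · simp only [mul_comm (ζ : GaussianInt), hζ]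

end LatticeCircle

section AngularCharacter

open Complex

/-- The angular character `z ↦ (z / |z|) ^ k`, which equals `exp (i k arg z)` for `z ≠ 0`. The power
form makes it multiplicative on all of `ℂ`; at `0` it takes the value `0 ^ k`. -/
noncomputable def angularCharacter (k : ℤ) : ℂ →* ℂ where
  toFun z := (z / ‖z‖) ^ k
  map_one' := by simp
  map_mul' z w := by rw [norm_mul, ofReal_mul, mul_div_mul_comm, mul_zpow]

theorem angularCharacter_apply (k : ℤ) (z : ℂ) : angularCharacter k z = (z / ‖z‖) ^ k := rfl

theorem angularCharacter_eq_exp (k : ℤ) {z : ℂ} (hz : z ≠ 0) :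
    angularCharacter k z = exp (k * arg z * I) := by
  have hz' : (‖z‖ : ℂ) ≠ 0 := ofReal_ne_zero.2 (norm_ne_zero_iff.2 hz)
  have sign_eq : z / ‖z‖ = exp (arg z * I) := by
    rw [div_eq_iff hz', mul_comm, norm_mul_exp_arg_mul_I]
  rw [angularCharacter_apply, sign_eq, ← exp_int_mul, mul_assoc]

theorem angularCharacter_conj (k : ℤ) (z : ℂ) :
    angularCharacter k (starRingEnd ℂ z) = starRingEnd ℂ (angularCharacter k z) := by
  simp only [angularCharacter_apply, norm_conj, map_zpow₀, map_div₀, conj_ofReal]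

theorem angularCharacter_pow_mul_conj_pow (k : ℤ) {z : ℂ} (hz : z ≠ 0) (i j : ℕ) :
    angularCharacter k (z ^ i * starRingEnd ℂ z ^ j) = exp (k * (i - j) * arg z * I) := by
  rw [map_mul, map_pow, map_pow, angularCharacter_conj, angularCharacter_eq_exp k hz, ← exp_conj,
    ← exp_nat_mul, ← exp_nat_mul, ← exp_add]
  congr 1
  simp only [map_mul, map_intCast, conj_ofReal, conj_I]
  ring

theorem angularCharacter_eq_one_of_pow_eq_one {n : ℕ} {k : ℤ} (hk : (n : ℤ) ∣ k) {z : ℂ}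
    (hz : z ^ n = 1) : angularCharacter k z = 1 := by
  obtain ⟨c, rfl⟩ := hk
  have sign_pow : (z / ‖z‖) ^ n = 1 := by
    rw [div_pow, ← ofReal_pow, ← norm_pow, hz, norm_one, ofReal_one, div_one]
  rw [angularCharacter_apply, zpow_mul, zpow_natCast, sign_pow, one_zpow]

end AngularCharacter

section LatticeSum

open Complex

theorem exp_latticeTheta_mul_I (u : ℤ × ℤ) :
    exp (latticeTheta u * I) = exp (arg (u.1 + u.2 * I) * I) := by
  unfold latticeTheta
  split_ifs
  · rfl
  · push_cast
    rw [add_mul, exp_add, exp_two_pi_mul_I, mul_one]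

theorem latticeS_eq_sum_angularCharacter {m : ℕ} (hm : m ≠ 0) (k : ℤ) :
    latticeS m k =
      ∑ u ∈ latticeCircle m, angularCharacter k (GaussianInt.toComplex ⟨u.1, u.2⟩) := by
  refine Finset.sum_congr rfl fun u hu => ?_
  have hu₀ : (⟨u.1, u.2⟩ : GaussianInt) ≠ 0 := by
    rw [← GaussianInt.norm_pos, mem_latticeCircle_iff_norm_eq (z := ⟨u.1, u.2⟩) |>.1 hu]
    exact_mod_cast Nat.pos_of_ne_zero hm
  rw [angularCharacter_eq_exp k (by rwa [Ne, GaussianInt.toComplex_eq_zero]),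
    GaussianInt.toComplex_def', mul_assoc, mul_assoc, exp_int_mul, exp_int_mul,
    exp_latticeTheta_mul_I]

theorem latticeS_prime_pow {k : ℤ} (h4 : 4 ∣ k) {p : ℕ} (hp : p.Prime) (hp2 : p ≠ 2) {a b : ℤ}
    (hab : (p : ℤ) = a ^ 2 + b ^ 2) (l : ℕ) :
    latticeS (p ^ l) k =
      4 * ∑ j ∈ Finset.range (l + 1), exp (k * (l - 2 * j) * arg (a + b * I) * I) := by
  set q : GaussianInt := ⟨a, b⟩ with q_def
  have hq : q.norm = p := by rw [hab, Zsqrtd.norm_def]; ring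
  have hq₀ : GaussianInt.toComplex q ≠ 0 := by
    rw [Ne, GaussianInt.toComplex_eq_zero, ← GaussianInt.norm_eq_zero, hq]
    exact_mod_cast hp.ne_zero
  have term_eq {ζ : GaussianInt} (hζ : ζ ∈ Polynomial.nthRootsFinset 4 1) (i j : ℕ) :
      angularCharacter k (GaussianInt.toComplex (ζ * (q ^ i * star q ^ j))) =
        exp (k * (i - j) * arg (a + b * I) * I) := by
    have hζ₄ : GaussianInt.toComplex ζ ^ 4 = 1 := by
      rw [← map_pow, (Polynomial.mem_nthRootsFinset four_pos 1).1 hζ, map_one]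
    rw [map_mul, map_mul, angularCharacter_eq_one_of_pow_eq_one h4 hζ₄, one_mul, map_mul, map_pow,
      map_pow, GaussianInt.toComplex_star, angularCharacter_pow_mul_conj_pow k hq₀, q_def,
      GaussianInt.toComplex_def']
  calc latticeS (p ^ l) k
    _ = ∑ ζ ∈ Polynomial.nthRootsFinset 4 (1 : GaussianInt), ∑ x ∈ antidiagonal l,
          angularCharacter k (GaussianInt.toComplex (ζ * (q ^ x.1 * star q ^ x.2))) := by
      rw [latticeS_eq_sum_angularCharacter (pow_ne_zero l hp.ne_zero)]
      exact sum_latticeCircle_prime_pow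
        (fun z => angularCharacter k (GaussianInt.toComplex z)) hp hp2 hq l
    _ = 4 * ∑ x ∈ antidiagonal l, exp (k * (x.1 - x.2) * arg (a + b * I) * I) := by
      rw [Finset.sum_congr rfl fun ζ hζ => Finset.sum_congr rfl fun x _ => term_eq hζ x.1 x.2,
        Finset.sum_const, card_nthRootsFinset_four_gaussianInt, nsmul_eq_mul, Nat.cast_ofNat]
    _ = 4 * ∑ j ∈ Finset.range (l + 1), exp (k * (l - 2 * j) * arg (a + b * I) * I) := by
      rw [← Finset.Nat.sum_antidiagonal_swap, Finset.Nat.sum_antidiagonal_eq_sum_range_succ_mk]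
      congr 1
      refine Finset.sum_congr rfl fun j hj => ?_
      rw [Prod.fst_swap, Prod.snd_swap, Nat.cast_sub (Finset.mem_range_succ_iff.1 hj)]
      congr 4
      ring

theorem latticeS_prime {k : ℤ} (h4 : 4 ∣ k) {p : ℕ} (hp : p.Prime) (hp2 : p ≠ 2) {a b : ℤ}
    (hab : (p : ℤ) = a ^ 2 + b ^ 2) :
    latticeS p k = 8 * cos (k * arg (a + b * I)) := by
  rw [← pow_one p, latticeS_prime_pow h4 hp hp2 hab, Finset.sum_range_succ, Finset.sum_range_one,
    cos]
  push_cast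
  ring_nf

theorem norm_sum_exp_ofReal_mul_I_le {ι : Type*} (s : Finset ι) (φ : ι → ℝ) :
    ‖∑ j ∈ s, exp (φ j * I)‖ ≤ s.card := by
  simpa using norm_sum_le_of_le s fun j _ => (norm_exp_ofReal_mul_I (φ j)).le

end LatticeSum

/-- For `k ≠ 0` divisible by `4`, a prime `p ≡ 1 (mod 4)` written as `p = a² + b²`,
and `θ_p = arg(a + ib)`: `|S(p^l, k)| = 4 |Σ_{j=0}^l exp(i k (l - 2j) θ_p)|` for all
`l ≥ 1`; in particular `|S(p, k)| = 8 |cos(k θ_p)|` and `|S(p^l, k)| ≤ 4 (l + 1)`. -/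
theorem absS_prime_one_mod_four_pow (k : ℤ) (hk : k ≠ 0) (h4 : 4 ∣ k)
    (p : ℕ) (hp : p.Prime) (hp1 : p % 4 = 1) (a b : ℤ) (hab : (p : ℤ) = a ^ 2 + b ^ 2) :
    (∀ l : ℕ, 1 ≤ l →
      ‖latticeS (p ^ l) k‖ =
        4 * ‖∑ j ∈ Finset.range (l + 1),
          Complex.exp ((k : ℂ) * ((l : ℂ) - 2 * (j : ℂ)) *
            (Complex.arg ((a : ℂ) + (b : ℂ) * Complex.I) : ℂ) * Complex.I)‖) ∧
    ‖latticeS p k‖ =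
      8 * |Real.cos ((k : ℝ) * Complex.arg ((a : ℂ) + (b : ℂ) * Complex.I))| ∧
    (∀ l : ℕ, 1 ≤ l → ‖latticeS (p ^ l) k‖ ≤ 4 * ((l : ℝ) + 1)) := by
  have hp2 : p ≠ 2 := by lia
  have norm_eval (l : ℕ) := congrArg norm (latticeS_prime_pow h4 hp hp2 hab l)
  simp only [norm_mul, Complex.norm_ofNat] at norm_eval
  refine ⟨fun l _ => norm_eval l, ?_, fun l _ => ?_⟩
  · rw [latticeS_prime h4 hp hp2 hab, norm_mul, Complex.norm_ofNat, ← Real.norm_eq_abs,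
      ← Complex.norm_real]
    push_cast
    rfl
  · rw [norm_eval l]
    gcongr
    simpa using norm_sum_exp_ofReal_mul_I_le (Finset.range (l + 1))
      fun j => k * (l - 2 * j) * Complex.arg (a + b * Complex.I)
end
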